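/- Extension theorem: there exists a constant C > 0, depending only on n, d, and C₀, such that for every measurable g : Γ → ℝ with ‖g‖_H < ∞ there exists u ∈ W with ‖u‖_W ≤ C ‖g‖_H and such that for σ-almost every x ∈ Γ, lim_{ρ→0} ⨍_{B(x,ρ)} u(y) dy = g(x); that is, the trace of u equals g σ-almost everywhere on Γ. -/

import Mathlib

open MeasureTheory Metric Set Filter
open scoped ENNReal NNReal Topology

noncomputable section

/-- Euclidean space `ℝⁿ`. -/
abbrev Euc (n : ℕ) := EuclideanSpace ℝ (Fin n)

/-- `Γ ⊆ ℝⁿ` is `d`-Ahlfors regular with constant `C₀`. -/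
def AhlforsRegular (n : ℕ) (d C₀ : ℝ) (Γ : Set (Euc n)) : Prop :=
  ∀ x ∈ Γ, ∀ r : ℝ, 0 < r →
    ENNReal.ofReal (C₀⁻¹ * r ^ d) ≤ μH[d] (Γ ∩ ball x r) ∧
      μH[d] (Γ ∩ ball x r) ≤ ENNReal.ofReal (C₀ * r ^ d)

/-- The weight `w(x) = dist(x, Γ) ^ (d + 1 - n)`. -/
def weightW (n : ℕ) (d : ℝ) (Γ : Set (Euc n)) (x : Euc n) : ℝ :=
  infDist x Γ ^ (d + 1 - (n : ℝ))

/-- The measure `m` with density `w` with respect to Lebesgue measure. -/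
def measW (n : ℕ) (d : ℝ) (Γ : Set (Euc n)) : Measure (Euc n) :=
  volume.withDensity fun x => ENNReal.ofReal (weightW n d Γ x)

/-- `v` is a distributional gradient of `u` on the open set `E`: for every smooth
compactly supported test function `φ` with support in `E`, `∫_E u ∇φ = -∫_E φ v`. -/
def IsDistribGradOn {n : ℕ} (u : Euc n → ℝ) (v : Euc n → Euc n) (E : Set (Euc n)) : Prop :=
  ∀ φ : Euc n → ℝ, ContDiff ℝ (⊤ : ℕ∞) φ → HasCompactSupport φ → tsupport φ ⊆ E →
    ∫ x in E, u x • gradient φ x = -∫ x in E, φ x • v x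

/-- The averages of `u` over small balls centered at `x` converge to `t`. -/
def HasTraceAt {n : ℕ} (u : Euc n → ℝ) (x : Euc n) (t : ℝ) : Prop :=
  Tendsto (fun ρ : ℝ => ⨍ y in ball x ρ, u y) (𝓝[>] (0 : ℝ)) (𝓝 t)

/-- `u` belongs to the weighted Sobolev space `W = Ẇ^{1,2}_w(Ω)`, `Ω = Γᶜ`, with
distributional gradient `v` on `Ω` lying in `L²(Ω, m)`. -/
structure MemW (n : ℕ) (d : ℝ) (Γ : Set (Euc n)) (u : Euc n → ℝ) (v : Euc n → Euc n) :
    Prop where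
  locInt : LocallyIntegrableOn u Γᶜ volume
  gradLocInt : LocallyIntegrableOn v Γᶜ volume
  isGrad : IsDistribGradOn u v Γᶜ
  l2 : ∫⁻ x in Γᶜ, ENNReal.ofReal (‖v x‖ ^ 2) ∂(measW n d Γ) < ⊤

/-- `u` belongs to the local space `W_r(E)`: `u ∈ L¹_loc(E)` and `φ u` (extended by `0`)
belongs to `W` for every smooth compactly supported `φ` with support in `E`. -/
def MemWrOn (n : ℕ) (d : ℝ) (Γ : Set (Euc n)) (E : Set (Euc n)) (u : Euc n → ℝ) : Prop :=
  LocallyIntegrableOn u E volume ∧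
    ∀ φ : Euc n → ℝ, ContDiff ℝ (⊤ : ℕ∞) φ → HasCompactSupport φ → tsupport φ ⊆ E →
      ∃ vφ : Euc n → Euc n, MemW n d Γ (fun x => φ x * u x) vφ

/-- Degenerate ellipticity and boundedness conditions for the matrix `A`. -/
def EllipticOn (n : ℕ) (d : ℝ) (Γ : Set (Euc n)) (A : Euc n → Euc n →L[ℝ] Euc n)
    (C₁ : ℝ) : Prop :=
  ∀ x, x ∉ Γ →
    (∀ ξ ζ : Euc n, |∑ i, A x ξ i * ζ i| ≤ C₁ * weightW n d Γ x * ‖ξ‖ * ‖ζ‖) ∧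
      ∀ ξ : Euc n, C₁⁻¹ * weightW n d Γ x * ‖ξ‖ ^ 2 ≤ ∑ i, A x ξ i * ξ i

/-- `u`, with gradient `v`, is a weak subsolution of `- div A ∇u = 0` on `U ⊆ Ω = Γᶜ`. -/
def SubsolOn {n : ℕ} (Γ : Set (Euc n)) (A : Euc n → Euc n →L[ℝ] Euc n)
    (v : Euc n → Euc n) (U : Set (Euc n)) : Prop :=
  ∀ φ : Euc n → ℝ, ContDiff ℝ (⊤ : ℕ∞) φ → HasCompactSupport φ → tsupport φ ⊆ U →
    (∀ x, 0 ≤ φ x) → ∫ x in Γᶜ, ∑ i, A x (v x) i * gradient φ x i ≤ 0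

/-- `u`, with gradient `v`, is a weak supersolution of `- div A ∇u = 0` on `U ⊆ Ω = Γᶜ`. -/
def SupersolOn {n : ℕ} (Γ : Set (Euc n)) (A : Euc n → Euc n →L[ℝ] Euc n)
    (v : Euc n → Euc n) (U : Set (Euc n)) : Prop :=
  ∀ φ : Euc n → ℝ, ContDiff ℝ (⊤ : ℕ∞) φ → HasCompactSupport φ → tsupport φ ⊆ U →
    (∀ x, 0 ≤ φ x) → 0 ≤ ∫ x in Γᶜ, ∑ i, A x (v x) i * gradient φ x i

/-- `u`, with gradient `v`, is a weak solution of `- div A ∇u = 0` on `U ⊆ Ω = Γᶜ`. -/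
def SolOn {n : ℕ} (Γ : Set (Euc n)) (A : Euc n → Euc n →L[ℝ] Euc n)
    (v : Euc n → Euc n) (U : Set (Euc n)) : Prop :=
  ∀ φ : Euc n → ℝ, ContDiff ℝ (⊤ : ℕ∞) φ → HasCompactSupport φ → tsupport φ ⊆ U →
    ∫ x in Γᶜ, ∑ i, A x (v x) i * gradient φ x i = 0

/-!
The extension is the mean of `g` weighted by the tent `max 0 (3 δ(x) - |x - y|)`. Since tents at
nearby points differ by a multiple of their distance, `|∇u(x)|` is at most
`C δ(x) ^ (-2d - 1) ∫∫ |g y - g z| dσ dσ` over the ball of radius `4 δ(x)`. Cauchy–Schwarz and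
Fubini bound the energy by the double integral of `|g y - g z|²` against
`∫ |x - y| ^ (-n - d - 1) dx` over `|x - y| ≥ |y - z| / 8`, which is a multiple of
`|y - z| ^ (-d - 1)`.

At a point `z` where the inner integral of the seminorm is finite, Cauchy–Schwarz and the local
integrability of `|y - z| ^ (-d)` bound the squared mean of `|u - g(z)|` over `B(z, ρ)` by that
integral times `C ρ`.
-/

section Gradient

variable {E : Type*} [NormedAddCommGroup E] [InnerProductSpace ℝ E] [FiniteDimensional ℝ E]

lemma norm_gradient (u : E → ℝ) (x : E) : ‖gradient u x‖ = ‖fderiv ℝ u x‖ :=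
  (InnerProductSpace.toDual ℝ E).symm.norm_map _

lemma gradient_eq_zero_of_notMem_tsupport {φ : E → ℝ} {x : E} (hx : x ∉ tsupport φ) :
    gradient φ x = 0 := by
  rw [gradient, Function.notMem_support.1 fun h => hx (support_fderiv_subset ℝ h), map_zero]

variable [MeasurableSpace E] [BorelSpace E]

lemma measurable_gradient (u : E → ℝ) : Measurable (gradient u) :=
  (InnerProductSpace.toDual ℝ E).symm.continuous.measurable.comp (measurable_fderiv ℝ u)

variable {μ : Measure E}

lemma locallyIntegrableOn_gradient_of_locallyLipschitzOn [IsLocallyFiniteMeasure μ] {u : E → ℝ}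
    {U : Set E} (hU : IsOpen U) (hu : LocallyLipschitzOn U u) :
    LocallyIntegrableOn (gradient u) U μ := by
  intro x hx
  obtain ⟨K, t, ht, hK⟩ := hu hx
  rw [hU.nhdsWithin_eq hx] at ht
  obtain ⟨ε, hε, hball⟩ := Metric.mem_nhds_iff.1 ht
  refine ⟨ball x ε, nhdsWithin_le_nhds (ball_mem_nhds x hε), ?_⟩
  refine Measure.integrableOn_of_bounded (M := K) measure_ball_lt_top.ne
    (measurable_gradient u).aestronglyMeasurable ?_
  filter_upwards [ae_restrict_mem measurableSet_ball] with y hy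
  rw [norm_gradient]
  exact norm_fderiv_le_of_lipschitzOn ℝ (mem_of_superset (isOpen_ball.mem_nhds hy) hball) hK

lemma integral_inner_smul_gradient_eq_neg [μ.IsAddHaarMeasure] {f φ : E → ℝ} {K : ℝ≥0}
    (hf : LipschitzWith K f) (hφ : ContDiff ℝ 1 φ) (hφc : HasCompactSupport φ) (w : E) :
    ∫ x, inner ℝ w (f x • gradient φ x) ∂μ = -∫ x, inner ℝ w (φ x • gradient f x) ∂μ := by
  obtain ⟨D, hD⟩ := hφ.lipschitzWith_of_hasCompactSupport hφc one_ne_zero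
  have inner_smul_gradient (a : ℝ) {h : E → ℝ} {x : E} (hh : DifferentiableAt ℝ h x) :
      inner ℝ w (a • gradient h x) = lineDeriv ℝ h x w * a := by
    rw [inner_smul_right, inner_gradient_right, conj_trivial, hh.lineDeriv_eq_fderiv, mul_comm]
  calc ∫ x, inner ℝ w (f x • gradient φ x) ∂μ
      = -∫ x, lineDeriv ℝ φ x (-w) * f x ∂μ := by
        simp_rw [lineDeriv_neg, neg_mul, integral_neg, neg_neg,
          inner_smul_gradient _ (hφ.differentiable one_ne_zero _)]
    _ = -∫ x, lineDeriv ℝ f x w * φ x ∂μ := by rw [hf.integral_lineDeriv_mul_eq hD hφc]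
    _ = -∫ x, inner ℝ w (φ x • gradient f x) ∂μ := by
        congr 1
        refine integral_congr_ae ?_
        filter_upwards [hf.ae_differentiableAt (μ := μ)] with x hx
        rw [inner_smul_gradient _ hx]

lemma integral_smul_gradient_eq_neg [μ.IsAddHaarMeasure] {f φ : E → ℝ} {K : ℝ≥0}
    (hf : LipschitzWith K f) (hφ : ContDiff ℝ 1 φ) (hφc : HasCompactSupport φ) :
    ∫ x, f x • gradient φ x ∂μ = -∫ x, φ x • gradient f x ∂μ := by
  have continuous_gradient : Continuous (gradient φ) :=
    (InnerProductSpace.toDual ℝ E).symm.continuous.comp (hφ.continuous_fderiv one_ne_zero)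
  have integrable_left : Integrable (fun x => f x • gradient φ x) μ :=
    (hf.continuous.smul continuous_gradient).integrable_of_hasCompactSupport
      (HasCompactSupport.intro hφc.isCompact fun x hx => by
        rw [Pi.smul_apply', gradient_eq_zero_of_notMem_tsupport hx, smul_zero])
  have integrable_right : Integrable (fun x => φ x • gradient f x) μ :=
    (hφ.continuous.integrable_of_hasCompactSupport hφc).smul_bdd K
      (measurable_gradient f).aestronglyMeasurable <| .of_forall fun x =>
        (norm_gradient f x).trans_le (norm_fderiv_le_of_lipschitz ℝ hf)
  refine ext_inner_left ℝ fun w => ?_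
  rw [inner_neg_right, ← integral_inner integrable_left, ← integral_inner integrable_right,
    integral_inner_smul_gradient_eq_neg hf hφ hφc]

end Gradient

lemma exists_lipschitzWith_eventuallyEq_of_isCompact {X : Type*} [PseudoMetricSpace X]
    [LocallyCompactSpace X] {u : X → ℝ} {K U : Set X} (hK : IsCompact K) (hU : IsOpen U)
    (hKU : K ⊆ U) (hu : LocallyLipschitzOn U u) :
    ∃ L f, LipschitzWith L f ∧ ∀ x ∈ K, f =ᶠ[𝓝 x] u := by
  obtain ⟨K', hK', hKK', hK'U⟩ := exists_compact_between hK hU hKU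
  obtain ⟨L, hL⟩ := (hu.mono hK'U).exists_lipschitzOnWith_of_compact hK'
  obtain ⟨f, hf, hfu⟩ := hL.extend_real
  refine ⟨L, f, hf, fun x hx => ?_⟩
  filter_upwards [mem_interior_iff_mem_nhds.1 (hKK' hx)] with y hy using (hfu hy).symm

lemma isDistribGradOn_gradient_of_locallyLipschitzOn {n : ℕ} {u : Euc n → ℝ} {U : Set (Euc n)}
    (hU : IsOpen U) (hu : LocallyLipschitzOn U u) : IsDistribGradOn u (gradient u) U := by
  intro φ hφ hφc hφU
  obtain ⟨L, f, hf, hfu⟩ := exists_lipschitzWith_eventuallyEq_of_isCompact hφc hU hφU hu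
  have smul_gradient_eq (x) : u x • gradient φ x = f x • gradient φ x := by
    by_cases hx : x ∈ tsupport φ
    · rw [(hfu x hx).eq_of_nhds]
    · rw [gradient_eq_zero_of_notMem_tsupport hx, smul_zero, smul_zero]
  have gradient_smul_eq (x) : φ x • gradient u x = φ x • gradient f x := by
    by_cases hx : x ∈ tsupport φ
    · rw [(hfu x hx).gradient_eq]
    · rw [image_eq_zero_of_notMem_tsupport hx, zero_smul, zero_smul]
  rw [setIntegral_eq_integral_of_forall_compl_eq_zero fun x hx => by
      rw [gradient_eq_zero_of_notMem_tsupport fun h => hx (hφU h), smul_zero],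
    setIntegral_eq_integral_of_forall_compl_eq_zero fun x hx => by
      rw [image_eq_zero_of_notMem_tsupport fun h => hx (hφU h), zero_smul]]
  simp_rw [smul_gradient_eq, gradient_smul_eq]
  exact integral_smul_gradient_eq_neg hf (hφ.of_le (by exact_mod_cast le_top)) hφc

section LIntegral

variable {α β : Type*} [MeasurableSpace α] [MeasurableSpace β] {μ : Measure α} {ν : Measure β}

lemma sq_lintegral_le_measure_univ_mul {f : α → ℝ≥0∞} (hf : AEMeasurable f μ) :
    (∫⁻ x, f x ∂μ) ^ 2 ≤ μ univ * ∫⁻ x, f x ^ 2 ∂μ := by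
  have holder := ENNReal.lintegral_mul_le_Lp_mul_Lq μ Real.HolderConjugate.two_two
    (f := fun _ => 1) aemeasurable_const hf
  simp only [Pi.mul_apply, one_mul, ENNReal.one_rpow, lintegral_const] at holder
  calc (∫⁻ x, f x ∂μ) ^ 2
      ≤ (μ univ ^ (1 / (2 : ℝ)) * (∫⁻ x, f x ^ (2 : ℝ) ∂μ) ^ (1 / (2 : ℝ))) ^ 2 := by gcongr
    _ = μ univ * ∫⁻ x, f x ^ 2 ∂μ := by
      rw [mul_pow, ← ENNReal.rpow_mul_natCast, ← ENNReal.rpow_mul_natCast]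
      norm_num

lemma sq_setLIntegral_le_measure_mul {f : α → ℝ≥0∞} {s : Set α}
    (hf : AEMeasurable f (μ.restrict s)) :
    (∫⁻ x in s, f x ∂μ) ^ 2 ≤ μ s * ∫⁻ x in s, f x ^ 2 ∂μ := by
  simpa only [Measure.restrict_apply_univ] using sq_lintegral_le_measure_univ_mul hf

lemma lintegral_mul_setLIntegral_section_swap [SFinite μ] [SFinite ν] {W : Set (α × β)}
    (hW : MeasurableSet W) {a : α → ℝ≥0∞} {b : β → ℝ≥0∞} (ha : AEMeasurable a μ)
    (hb : AEMeasurable b ν) :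
    ∫⁻ x, a x * ∫⁻ y in {y | (x, y) ∈ W}, b y ∂ν ∂μ =
      ∫⁻ y, (∫⁻ x in {x | (x, y) ∈ W}, a x ∂μ) * b y ∂ν := by
  have left (x) : a x * ∫⁻ y in {y | (x, y) ∈ W}, b y ∂ν =
      ∫⁻ y, W.indicator (fun q => a q.1 * b q.2) (x, y) ∂ν := by
    have hs : MeasurableSet {y | (x, y) ∈ W} := measurable_prodMk_left hW
    rw [← lintegral_const_mul'' _ hb.restrict, ← lintegral_indicator hs]
    rfl
  have right (y) : (∫⁻ x in {x | (x, y) ∈ W}, a x ∂μ) * b y =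
      ∫⁻ x, W.indicator (fun q => a q.1 * b q.2) (x, y) ∂μ := by
    have hs : MeasurableSet {x | (x, y) ∈ W} := measurable_prodMk_right hW
    rw [← lintegral_mul_const'' _ ha.restrict, ← lintegral_indicator hs]
    rfl
  simp_rw [left, right]
  exact lintegral_lintegral_swap ((ha.comp_fst.mul hb.comp_snd).indicator hW)

lemma edist_average_le_laverage {F : Type*} [NormedAddCommGroup F] [NormedSpace ℝ F]
    [CompleteSpace F] [IsFiniteMeasure μ] [NeZero μ] {u : α → F} (hu : Integrable u μ) (t : F) :
    edist (⨍ x, u x ∂μ) t ≤ ⨍⁻ x, ‖u x - t‖ₑ ∂μ := by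
  have average_sub : (⨍ x, u x ∂μ) - t = ⨍ x, (u x - t) ∂μ := by
    simp only [average]
    rw [integral_sub hu.to_average (integrable_const t), integral_const, probReal_univ, one_smul]
  rw [edist_eq_enorm_sub, average_sub]
  exact enorm_integral_le_lintegral_enorm _

end LIntegral

section PowerKernels

lemma rpow_neg_le_mul_rpow_neg {a δ t p : ℝ} (ha : 0 < a) (ht : 0 < t) (hδ : t ≤ a * δ)
    (hp : 0 ≤ p) : δ ^ (-p) ≤ a ^ p * t ^ (-p) := by
  have hδ0 : 0 < δ := pos_of_mul_pos_right (ht.trans_le hδ) ha.le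
  calc δ ^ (-p) = a ^ p * (a * δ) ^ (-p) := by
        rw [Real.mul_rpow ha.le hδ0.le, ← mul_assoc, ← Real.rpow_add ha, add_neg_cancel,
          Real.rpow_zero, one_mul]
    _ ≤ a ^ p * t ^ (-p) :=
        mul_le_mul_of_nonneg_left (Real.rpow_le_rpow_of_nonpos ht hδ (neg_nonpos.2 hp))
          (Real.rpow_nonneg ha.le p)

lemma inv_smul_sub_mem_unitBall_iff {E : Type*} [SeminormedAddCommGroup E] [NormedSpace ℝ E]
    {x y : E} {r : ℝ} (hr : 0 < r) : r⁻¹ • (x - y) ∈ ball 0 1 ↔ x ∈ ball y r := by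
  rw [mem_ball_zero_iff, norm_smul, norm_inv, Real.norm_of_nonneg hr.le, ← dist_eq_norm,
    inv_mul_lt_one₀ hr, mem_ball]

variable {E : Type*} [NormedAddCommGroup E] [NormedSpace ℝ E] [FiniteDimensional ℝ E]
  [MeasurableSpace E] [BorelSpace E] {μ : Measure E} [μ.IsAddHaarMeasure]

lemma lintegral_comp_inv_smul_sub {h : E → ℝ≥0∞} (y : E) {r : ℝ} (hr : 0 < r) :
    ∫⁻ x, h (r⁻¹ • (x - y)) ∂μ =
      ENNReal.ofReal (r ^ Module.finrank ℝ E) * ∫⁻ x, h x ∂μ := by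
  have hr' : r⁻¹ ≠ 0 := inv_ne_zero hr.ne'
  calc ∫⁻ x, h (r⁻¹ • (x - y)) ∂μ
      = ∫⁻ x, h (MeasurableEquiv.smul₀ r⁻¹ hr' x) ∂μ :=
        lintegral_sub_right_eq_self (fun x => h (r⁻¹ • x)) y
    _ = ENNReal.ofReal (r ^ Module.finrank ℝ E) * ∫⁻ x, h x ∂μ := by
        rw [← lintegral_map_equiv, MeasurableEquiv.coe_smul₀, Measure.map_addHaar_smul μ hr',
          lintegral_smul_measure, inv_pow, inv_inv, abs_of_pos (pow_pos hr _), smul_eq_mul]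

lemma setLIntegral_dist_rpow_eq {s : Set E} (hs : MeasurableSet s) (p : ℝ) (y : E) {r : ℝ}
    (hr : 0 < r) :
    ∫⁻ x in {x | r⁻¹ • (x - y) ∈ s}, ENNReal.ofReal (dist x y ^ p) ∂μ =
      ENNReal.ofReal (r ^ (Module.finrank ℝ E + p)) *
        ∫⁻ x in s, ENNReal.ofReal (‖x‖ ^ p) ∂μ := by
  have dist_rpow (x : E) : dist x y ^ p = r ^ p * ‖r⁻¹ • (x - y)‖ ^ p := by
    rw [norm_smul, norm_inv, Real.norm_of_nonneg hr.le, ← dist_eq_norm,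
      ← Real.mul_rpow hr.le (by positivity), mul_inv_cancel_left₀ hr.ne']
  have hs' : MeasurableSet {x | r⁻¹ • (x - y) ∈ s} :=
    ((measurable_id.sub_const y).const_smul r⁻¹) hs
  simp_rw [dist_rpow, ENNReal.ofReal_mul (Real.rpow_nonneg hr.le p)]
  rw [lintegral_const_mul _ (by fun_prop), ← lintegral_indicator hs', ← lintegral_indicator hs,
    Real.rpow_add hr, Real.rpow_natCast, ENNReal.ofReal_mul (by positivity), mul_right_comm,
    ← lintegral_comp_inv_smul_sub y hr, mul_comm]
  rfl

lemma setLIntegral_ball_dist_rpow_eq (p : ℝ) (y : E) {r : ℝ} (hr : 0 < r) :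
    ∫⁻ x in ball y r, ENNReal.ofReal (dist x y ^ p) ∂μ =
      ENNReal.ofReal (r ^ (Module.finrank ℝ E + p)) *
        ∫⁻ x in ball 0 1, ENNReal.ofReal (‖x‖ ^ p) ∂μ := by
  simp only [← setLIntegral_dist_rpow_eq measurableSet_ball p y hr,
    inv_smul_sub_mem_unitBall_iff hr]
  rfl

lemma setLIntegral_compl_ball_dist_rpow_eq (p : ℝ) (y : E) {r : ℝ} (hr : 0 < r) :
    ∫⁻ x in (ball y r)ᶜ, ENNReal.ofReal (dist x y ^ p) ∂μ =
      ENNReal.ofReal (r ^ (Module.finrank ℝ E + p)) *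
        ∫⁻ x in (ball 0 1)ᶜ, ENNReal.ofReal (‖x‖ ^ p) ∂μ := by
  simp only [← setLIntegral_dist_rpow_eq measurableSet_ball.compl p y hr, mem_compl_iff,
    inv_smul_sub_mem_unitBall_iff hr]
  rfl

lemma setLIntegral_unitBall_norm_rpow_neg_lt_top {p : ℝ} (hp0 : 0 ≤ p)
    (hp : p < Module.finrank ℝ E) :
    ∫⁻ x in ball (0 : E) 1, ENNReal.ofReal (‖x‖ ^ (-p)) ∂μ < ⊤ := by
  have hE : 1 ≤ Module.finrank ℝ E := by exact_mod_cast hp0.trans_lt hp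
  refine (integrableOn_ball_of_norm_le_rpow (C := 1) hE hp (.of_forall fun x => ?_)
    (Measurable.aestronglyMeasurable (by fun_prop))).lintegral_lt_top
  rw [Real.norm_of_nonneg (by positivity), one_mul]

lemma setLIntegral_compl_unitBall_norm_rpow_neg_lt_top {p : ℝ} (hp : Module.finrank ℝ E < p) :
    ∫⁻ x in (ball (0 : E) 1)ᶜ, ENNReal.ofReal (‖x‖ ^ (-p)) ∂μ < ⊤ := by
  have hp0 : 0 ≤ p := (Nat.cast_nonneg _).trans hp.le
  calc ∫⁻ x in (ball (0 : E) 1)ᶜ, ENNReal.ofReal (‖x‖ ^ (-p)) ∂μ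
      ≤ ∫⁻ x in (ball (0 : E) 1)ᶜ,
          ENNReal.ofReal (2 ^ p) * ENNReal.ofReal ((1 + ‖x‖) ^ (-p)) ∂μ := by
        refine setLIntegral_mono' measurableSet_ball.compl fun x hx => ?_
        have hx : 1 ≤ ‖x‖ := by simpa using hx
        rw [← ENNReal.ofReal_mul (by positivity)]
        gcongr
        exact rpow_neg_le_mul_rpow_neg two_pos (by positivity) (by linarith) hp0
    _ ≤ ENNReal.ofReal (2 ^ p) * ∫⁻ x, ENNReal.ofReal ((1 + ‖x‖) ^ (-p)) ∂μ := by
        rw [lintegral_const_mul _ (by fun_prop)]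
        gcongr
        exact Measure.restrict_le_self
    _ < ⊤ := ENNReal.mul_lt_top ENNReal.ofReal_lt_top (finite_integral_one_add_norm hp)

end PowerKernels

lemma measure_eq_zero_of_sigmaFinite_restrict_hausdorffMeasure {E : Type*} [NormedAddCommGroup E]
    [NormedSpace ℝ E] [FiniteDimensional ℝ E] [MeasurableSpace E] [BorelSpace E] {d : ℝ}
    (hd : d < Module.finrank ℝ E) {s : Set E} [SigmaFinite ((μH[d] : Measure E).restrict s)]
    (μ : Measure E) [μ.IsAddHaarMeasure] : μ s = 0 := by
  have haar_absolutelyContinuous : μ ≪ μH[Module.finrank ℝ E] :=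
    Measure.absolutelyContinuous_isAddHaarMeasure μ _
  refine haar_absolutelyContinuous ?_
  rw [← univ_inter s, ← iUnion_spanningSets (μH[d].restrict s), iUnion_inter,
    measure_iUnion_null_iff]
  intro k
  refine (Measure.hausdorffMeasure_zero_or_top hd _).resolve_right (ne_of_lt ?_)
  rw [← Measure.restrict_apply (measurableSet_spanningSets _ k)]
  exact measure_spanningSets_lt_top _ k

section AhlforsRegular

/-- The measure `σ` is carried by the nonempty closed set `Γ` and is Ahlfors regular of dimension
`d` there: balls of every radius `r` centred on `Γ` have measure comparable to `r ^ d`, with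
comparison constant `C₀`. -/
structure IsAhlforsRegularOn {X : Type*} [PseudoMetricSpace X] [MeasurableSpace X]
    (σ : Measure X) (Γ : Set X) (d C₀ : ℝ) : Prop where
  isClosed : IsClosed Γ
  nonempty : Γ.Nonempty
  const_pos : 0 < C₀
  ae_mem : ∀ᵐ y ∂σ, y ∈ Γ
  le_measure_ball : ∀ x ∈ Γ, ∀ r : ℝ, 0 < r → ENNReal.ofReal (C₀⁻¹ * r ^ d) ≤ σ (ball x r)
  measure_ball_le : ∀ x ∈ Γ, ∀ r : ℝ, 0 < r → σ (ball x r) ≤ ENNReal.ofReal (C₀ * r ^ d)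

lemma AhlforsRegular.isAhlforsRegularOn {n : ℕ} {d C₀ : ℝ} {Γ : Set (Euc n)}
    (h : AhlforsRegular n d C₀ Γ) (hcl : IsClosed Γ) (hne : Γ.Nonempty) (hC₀ : 0 < C₀) :
    IsAhlforsRegularOn (μH[d].restrict Γ) Γ d C₀ where
  isClosed := hcl
  nonempty := hne
  const_pos := hC₀
  ae_mem := ae_restrict_mem hcl.measurableSet
  le_measure_ball x hx r hr := by
    rw [Measure.restrict_apply measurableSet_ball, inter_comm]
    exact (h x hx r hr).1
  measure_ball_le x hx r hr := by
    rw [Measure.restrict_apply measurableSet_ball, inter_comm]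
    exact (h x hx r hr).2

namespace IsAhlforsRegularOn

variable {X : Type*} [PseudoMetricSpace X] [MeasurableSpace X] {σ : Measure X} {Γ : Set X}
  {d C₀ : ℝ}

lemma infDist_pos (h : IsAhlforsRegularOn σ Γ d C₀) {x : X} (hx : x ∉ Γ) : 0 < infDist x Γ :=
  (h.isClosed.notMem_iff_infDist_pos h.nonempty).1 hx

lemma neZero (h : IsAhlforsRegularOn σ Γ d C₀) : NeZero σ := by
  obtain ⟨p, hp⟩ := h.nonempty
  have ball_pos : 0 < σ (ball p 1) := by
    refine lt_of_lt_of_le ?_ (h.le_measure_ball p hp 1 one_pos)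
    simpa using h.const_pos
  exact ⟨fun hσ => by simp [hσ] at ball_pos⟩

lemma measure_ball_le_infDist [ProperSpace X] (h : IsAhlforsRegularOn σ Γ d C₀) (x : X) {r : ℝ}
    (hr : 0 < r) : σ (ball x r) ≤ ENNReal.ofReal (C₀ * (r + infDist x Γ) ^ d) := by
  obtain ⟨p, hp, hxp⟩ := h.isClosed.exists_infDist_eq_dist h.nonempty x
  rw [hxp]
  exact (measure_mono (ball_subset_ball' le_rfl)).trans
    (h.measure_ball_le p hp _ (add_pos_of_pos_of_nonneg hr dist_nonneg))

lemma measure_ball_four_mul_infDist_le [ProperSpace X] (h : IsAhlforsRegularOn σ Γ d C₀) {x : X}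
    (hx : x ∉ Γ) :
    σ (ball x (4 * infDist x Γ)) ≤ ENNReal.ofReal (C₀ * (5 ^ d * infDist x Γ ^ d)) := by
  have hδ := h.infDist_pos hx
  rw [← Real.mul_rpow (by norm_num) hδ.le]
  exact (h.measure_ball_le_infDist x (by positivity)).trans_eq (by ring_nf)

lemma isLocallyFiniteMeasure [ProperSpace X] (h : IsAhlforsRegularOn σ Γ d C₀) :
    IsLocallyFiniteMeasure σ :=
  ⟨fun x => ⟨ball x 1, ball_mem_nhds x one_pos,
    (h.measure_ball_le_infDist x one_pos).trans_lt ENNReal.ofReal_lt_top⟩⟩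

end IsAhlforsRegularOn

end AhlforsRegular

section Gagliardo

variable {X F : Type*} [PseudoMetricSpace X] [MeasurableSpace X] [NormedAddCommGroup F]

/-- The inner integral of the Gagliardo seminorm of `g` with kernel `dist x y ^ (-s)`, so that
the squared seminorm is its integral in `x`. -/
def gagliardoDensity (s : ℝ) (σ : Measure X) (g : X → F) (x : X) : ℝ≥0∞ :=
  ∫⁻ y, ‖g x - g y‖ₑ ^ 2 / ENNReal.ofReal (dist x y ^ s) ∂σ

lemma aemeasurable_enorm_sub_prod {α : Type*} [MeasurableSpace α] {σ : Measure α} [SFinite σ]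
    {g : α → F} (hg : AEStronglyMeasurable g σ) :
    AEMeasurable (fun q : α × α => ‖g q.1 - g q.2‖ₑ) (σ.prod σ) :=
  (hg.comp_fst.sub hg.comp_snd).enorm

variable [OpensMeasurableSpace X] {σ : Measure X} {g : X → F} {s : ℝ}

lemma aemeasurable_enorm_sub_sq_div_prod [SecondCountableTopology X] [SFinite σ]
    (hg : AEStronglyMeasurable g σ) (s : ℝ) :
    AEMeasurable (fun q : X × X => ‖g q.1 - g q.2‖ₑ ^ 2 / ENNReal.ofReal (dist q.1 q.2 ^ s))
      (σ.prod σ) := by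
  have dist_rpow : Measurable fun q : X × X => ENNReal.ofReal (dist q.1 q.2 ^ s) := by fun_prop
  exact ((aemeasurable_enorm_sub_prod hg).pow_const 2).div dist_rpow.aemeasurable

lemma aemeasurable_gagliardoDensity [SecondCountableTopology X] [SFinite σ]
    (hg : AEStronglyMeasurable g σ) : AEMeasurable (gagliardoDensity s σ g) σ :=
  (aemeasurable_enorm_sub_sq_div_prod hg s).lintegral_prod_right'

lemma sq_setLIntegral_ball_enorm_sub_le (hs : 0 ≤ s) (hg : AEStronglyMeasurable g σ) (p : X)
    {r : ℝ} (hr : 0 < r) :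
    (∫⁻ y in ball p r, ‖g y - g p‖ₑ ∂σ) ^ 2 ≤
      σ (ball p r) * (ENNReal.ofReal (r ^ s) * gagliardoDensity s σ g p) := by
  have enorm_sq_le (y) (hy : y ∈ ball p r) : ‖g y - g p‖ₑ ^ 2 ≤
      ENNReal.ofReal (r ^ s) * (‖g p - g y‖ₑ ^ 2 / ENNReal.ofReal (dist p y ^ s)) := by
    rw [enorm_sub_rev]
    calc ‖g p - g y‖ₑ ^ 2
        = ENNReal.ofReal (r ^ s) * (‖g p - g y‖ₑ ^ 2 / ENNReal.ofReal (r ^ s)) :=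
          (ENNReal.mul_div_cancel (ENNReal.ofReal_pos.2 (by positivity)).ne'
            ENNReal.ofReal_ne_top).symm
      _ ≤ _ := by
          gcongr
          exact (mem_ball'.1 hy).le
  have meas : AEMeasurable (fun y => ‖g y - g p‖ₑ) (σ.restrict (ball p r)) :=
    (hg.restrict.sub aestronglyMeasurable_const).enorm
  calc (∫⁻ y in ball p r, ‖g y - g p‖ₑ ∂σ) ^ 2
      ≤ σ (ball p r) * ∫⁻ y in ball p r, ‖g y - g p‖ₑ ^ 2 ∂σ :=
        sq_setLIntegral_le_measure_mul meas
    _ ≤ σ (ball p r) * ∫⁻ y in ball p r,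
          ENNReal.ofReal (r ^ s) * (‖g p - g y‖ₑ ^ 2 / ENNReal.ofReal (dist p y ^ s)) ∂σ := by
        gcongr 1
        exact setLIntegral_mono' measurableSet_ball enorm_sq_le
    _ ≤ σ (ball p r) * (ENNReal.ofReal (r ^ s) * gagliardoDensity s σ g p) := by
        rw [lintegral_const_mul' _ _ ENNReal.ofReal_ne_top]
        gcongr
        exact setLIntegral_le_lintegral _ _

lemma locallyIntegrable_of_gagliardoDensity_ne_top [ProperSpace X] [IsLocallyFiniteMeasure σ]
    (hs : 0 ≤ s) (hg : AEStronglyMeasurable g σ) {p : X}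
    (hp : gagliardoDensity s σ g p ≠ ⊤) : LocallyIntegrable g σ := by
  intro x
  have hr : 0 < dist x p + 1 := by positivity
  refine ⟨ball p (dist x p + 1), isOpen_ball.mem_nhds (by simp), ?_⟩
  have hball : σ (ball p (dist x p + 1)) ≠ ⊤ := measure_ball_lt_top.ne
  have osc_ne_top : ∫⁻ y in ball p (dist x p + 1), ‖g y - g p‖ₑ ∂σ ≠ ⊤ := by
    refine fun htop => absurd (sq_setLIntegral_ball_enorm_sub_le hs hg p hr) (not_le.2 ?_)
    rw [htop, ENNReal.top_pow two_ne_zero]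
    exact (ENNReal.mul_ne_top hball (ENNReal.mul_ne_top ENNReal.ofReal_ne_top hp)).lt_top
  have integrable_sub : IntegrableOn (fun y => g y - g p) (ball p (dist x p + 1)) σ :=
    ⟨hg.restrict.sub aestronglyMeasurable_const, osc_ne_top.lt_top⟩
  exact (integrable_sub.add (integrableOn_const (C := g p) hball)).congr_fun
    (fun y _ => sub_add_cancel _ _) measurableSet_ball

lemma locallyIntegrable_of_lintegral_gagliardoDensity_ne_top [ProperSpace X]
    [IsLocallyFiniteMeasure σ] [NeZero σ] (hs : 0 ≤ s) (hg : AEStronglyMeasurable g σ)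
    (h : ∫⁻ x, gagliardoDensity s σ g x ∂σ ≠ ⊤) : LocallyIntegrable g σ :=
  have ⟨_, hp⟩ := (ae_lt_top' (aemeasurable_gagliardoDensity hg) h).exists
  locallyIntegrable_of_gagliardoDensity_ne_top hs hg hp.ne

end Gagliardo

section TentKernel

variable {X : Type*} [PseudoMetricSpace X]

/-- The tent of height and radius `3 * infDist x Γ` centred at `x`: the averaging kernel of the
extension operator, supported in a ball around `x` that reaches well into `Γ`. -/
def tentKernel (Γ : Set X) (x y : X) : ℝ :=
  max 0 (3 * infDist x Γ - dist x y)

variable {Γ : Set X} {x y : X}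

lemma tentKernel_nonneg : 0 ≤ tentKernel Γ x y :=
  le_max_left _ _

lemma tentKernel_le : tentKernel Γ x y ≤ 3 * infDist x Γ :=
  max_le (mul_nonneg zero_le_three infDist_nonneg) (sub_le_self _ dist_nonneg)

lemma tentKernel_eq_zero (hy : y ∉ ball x (3 * infDist x Γ)) : tentKernel Γ x y = 0 :=
  max_eq_left (sub_nonpos.2 (not_lt.1 (mt mem_ball'.2 hy)))

lemma continuous_tentKernel : Continuous (tentKernel Γ x) := by
  unfold tentKernel
  fun_prop

lemma abs_tentKernel_sub_le (x x' y : X) :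
    |tentKernel Γ x' y - tentKernel Γ x y| ≤ 4 * dist x' x := by
  rw [tentKernel, tentKernel, max_comm 0, max_comm 0]
  refine (abs_max_sub_max_le_abs _ _ _).trans (abs_le.2 ⟨?_, ?_⟩)
  · linarith [infDist_le_infDist_add_dist (s := Γ) (x := x) (y := x'), dist_triangle x' x y,
      dist_comm x x']
  · linarith [infDist_le_infDist_add_dist (s := Γ) (x := x') (y := x), dist_triangle x x' y,
      dist_comm x x']

end TentKernel

section TentExtension

variable {X F : Type*} [MetricSpace X] [MeasurableSpace X] [NormedAddCommGroup F]
  [NormedSpace ℝ F]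

/-- The total mass of the tent kernel centred at `x`. -/
def tentMass (Γ : Set X) (σ : Measure X) (x : X) : ℝ :=
  ∫ y, tentKernel Γ x y ∂σ

/-- The extension of `g` off `Γ`: the mean of `g` weighted by the tent kernel. On `Γ` itself the
kernel vanishes and the value is the junk value `0`. -/
def tentExtension (Γ : Set X) (σ : Measure X) (g : X → F) (x : X) : F :=
  (tentMass Γ σ x)⁻¹ • ∫ y, tentKernel Γ x y • g y ∂σ

variable [OpensMeasurableSpace X] [ProperSpace X] {Γ : Set X} {σ : Measure X} {d C₀ : ℝ}
  {g : X → F} {x : X}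

lemma integrable_tentKernel_smul (hg : LocallyIntegrable g σ) (x : X) :
    Integrable (fun y => tentKernel Γ x y • g y) σ :=
  hg.integrable_smul_left_of_hasCompactSupport continuous_tentKernel <|
    HasCompactSupport.intro (isCompact_closedBall x (3 * infDist x Γ)) fun _ hy =>
      tentKernel_eq_zero fun h => hy (ball_subset_closedBall h)

lemma integrable_tentKernel [IsLocallyFiniteMeasure σ] (x : X) :
    Integrable (tentKernel Γ x) σ := by
  simpa only [smul_eq_mul, mul_one] using
    integrable_tentKernel_smul (locallyIntegrable_const (1 : ℝ)) x

lemma le_tentMass (h : IsAhlforsRegularOn σ Γ d C₀) (hx : x ∉ Γ) :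
    C₀⁻¹ * infDist x Γ ^ (d + 1) ≤ tentMass Γ σ x := by
  have := h.isLocallyFiniteMeasure
  have hδ := h.infDist_pos hx
  obtain ⟨p, hp, hxp⟩ := h.isClosed.exists_infDist_eq_dist h.nonempty x
  have infDist_le_kernel (y) (hy : y ∈ ball p (infDist x Γ)) : infDist x Γ ≤ tentKernel Γ x y :=
    le_max_of_le_right (by linarith [dist_triangle x p y, mem_ball'.1 hy])
  have le_measureReal : C₀⁻¹ * infDist x Γ ^ d ≤ σ.real (ball p (infDist x Γ)) :=
    (ENNReal.ofReal_le_iff_le_toReal measure_ball_lt_top.ne).1 (h.le_measure_ball p hp _ hδ)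
  calc C₀⁻¹ * infDist x Γ ^ (d + 1)
      = C₀⁻¹ * infDist x Γ ^ d * infDist x Γ := by rw [Real.rpow_add_one hδ.ne', mul_assoc]
    _ ≤ σ.real (ball p (infDist x Γ)) * infDist x Γ := by gcongr
    _ = ∫ _ in ball p (infDist x Γ), infDist x Γ ∂σ := by rw [setIntegral_const, smul_eq_mul]
    _ ≤ ∫ y in ball p (infDist x Γ), tentKernel Γ x y ∂σ :=
        setIntegral_mono_on (integrableOn_const measure_ball_lt_top.ne)
          (integrable_tentKernel x).integrableOn measurableSet_ball infDist_le_kernel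
    _ ≤ tentMass Γ σ x :=
        setIntegral_le_integral (integrable_tentKernel x) (.of_forall fun _ => tentKernel_nonneg)

lemma tentMass_pos (h : IsAhlforsRegularOn σ Γ d C₀) (hx : x ∉ Γ) : 0 < tentMass Γ σ x := by
  have hδ := h.infDist_pos hx
  have hC₀ := h.const_pos
  exact lt_of_lt_of_le (by positivity) (le_tentMass h hx)

variable [CompleteSpace F]

lemma integral_tentKernel_smul_sub (h : IsAhlforsRegularOn σ Γ d C₀) (hg : LocallyIntegrable g σ)
    (hx : x ∉ Γ) (c : F) :
    ∫ y, tentKernel Γ x y • (g y - c) ∂σ = tentMass Γ σ x • (tentExtension Γ σ g x - c) := by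
  have := h.isLocallyFiniteMeasure
  simp_rw [smul_sub]
  rw [integral_sub (integrable_tentKernel_smul hg x) ((integrable_tentKernel x).smul_const c),
    integral_smul_const, tentExtension, smul_inv_smul₀ (tentMass_pos h hx).ne', tentMass]

lemma enorm_tentExtension_sub_le (h : IsAhlforsRegularOn σ Γ d C₀) (hg : LocallyIntegrable g σ)
    (hx : x ∉ Γ) (c : F) :
    ‖tentExtension Γ σ g x - c‖ₑ ≤ ENNReal.ofReal (C₀ * infDist x Γ ^ (-(d + 1))) *
      ‖∫ y, tentKernel Γ x y • (g y - c) ∂σ‖ₑ := by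
  have hδ := h.infDist_pos hx
  have hC₀ := h.const_pos
  have one_le : 1 ≤ C₀ * infDist x Γ ^ (-(d + 1)) * tentMass Γ σ x := by
    calc 1 = C₀ * infDist x Γ ^ (-(d + 1)) * (C₀⁻¹ * infDist x Γ ^ (d + 1)) := by
          rw [Real.rpow_neg hδ.le]
          field_simp
      _ ≤ _ := by gcongr; exact le_tentMass h hx
  rw [integral_tentKernel_smul_sub h hg hx, enorm_smul, Real.enorm_of_nonneg (tentMass_pos h hx).le,
    ← mul_assoc, ← ENNReal.ofReal_mul (by positivity)]
  exact le_mul_of_one_le_left' (ENNReal.one_le_ofReal.2 one_le)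

lemma enorm_tentExtension_sub_le_setLIntegral (h : IsAhlforsRegularOn σ Γ d C₀)
    (hg : LocallyIntegrable g σ) (hx : x ∉ Γ) (c : F) :
    ‖tentExtension Γ σ g x - c‖ₑ ≤ ENNReal.ofReal (3 * C₀ * infDist x Γ ^ (-d)) *
      ∫⁻ y in ball x (3 * infDist x Γ), ‖g y - c‖ₑ ∂σ := by
  have hδ := h.infDist_pos hx
  have hC₀ := h.const_pos
  have enorm_integral_le : ‖∫ y, tentKernel Γ x y • (g y - c) ∂σ‖ₑ ≤
      ENNReal.ofReal (3 * infDist x Γ) *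
        ∫⁻ y in ball x (3 * infDist x Γ), ‖g y - c‖ₑ ∂σ := by
    rw [← setIntegral_eq_integral_of_forall_compl_eq_zero fun y hy => by
      rw [tentKernel_eq_zero hy, zero_smul]]
    refine (enorm_integral_le_lintegral_enorm _).trans ?_
    rw [← lintegral_const_mul' _ _ ENNReal.ofReal_ne_top]
    refine lintegral_mono fun y => ?_
    rw [enorm_smul, Real.enorm_of_nonneg tentKernel_nonneg]
    gcongr
    exact tentKernel_le
  refine (enorm_tentExtension_sub_le h hg hx c).trans
    ((mul_le_mul_right enorm_integral_le _).trans ?_)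
  rw [← mul_assoc, ← ENNReal.ofReal_mul (by positivity)]
  refine mul_le_mul_left (ENNReal.ofReal_le_ofReal (le_of_eq ?_)) _
  rw [neg_add, ← sub_eq_add_neg, Real.rpow_sub_one hδ.ne']
  field_simp

-- Subtracting the constant `tentExtension Γ σ g x` from `g` kills the integral against the kernel
-- at `x`, so that only the difference of the two kernels remains.
lemma edist_tentExtension_le (h : IsAhlforsRegularOn σ Γ d C₀) (hg : LocallyIntegrable g σ)
    {x' : X} (hx : x ∉ Γ) (hx' : x' ∉ Γ) {B : Set X} (hB : ball x (3 * infDist x Γ) ⊆ B)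
    (hB' : ball x' (3 * infDist x' Γ) ⊆ B) :
    edist (tentExtension Γ σ g x') (tentExtension Γ σ g x) ≤
      ENNReal.ofReal (4 * C₀ * infDist x' Γ ^ (-(d + 1))) *
        (∫⁻ y in B, ‖g y - tentExtension Γ σ g x‖ₑ ∂σ) * edist x' x := by
  have := h.isLocallyFiniteMeasure
  set c := tentExtension Γ σ g x with hc
  have hgc : LocallyIntegrable (fun y => g y - c) σ := hg.sub (locallyIntegrable_const c)
  have integral_eq : ∫ y, tentKernel Γ x' y • (g y - c) ∂σ =
      ∫ y in B, (tentKernel Γ x' y - tentKernel Γ x y) • (g y - c) ∂σ := by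
    rw [setIntegral_eq_integral_of_forall_compl_eq_zero fun y hy => by
      rw [tentKernel_eq_zero fun hy' => hy (hB hy'), tentKernel_eq_zero fun hy' => hy (hB' hy'),
        sub_zero, zero_smul]]
    simp_rw [sub_smul]
    rw [integral_sub (integrable_tentKernel_smul hgc x') (integrable_tentKernel_smul hgc x),
      integral_tentKernel_smul_sub h hg hx, ← hc, sub_self, smul_zero, sub_zero]
  have enorm_integral_le : ‖∫ y, tentKernel Γ x' y • (g y - c) ∂σ‖ₑ ≤
      ENNReal.ofReal (4 * dist x' x) * ∫⁻ y in B, ‖g y - c‖ₑ ∂σ := by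
    rw [integral_eq, ← lintegral_const_mul' _ _ ENNReal.ofReal_ne_top]
    refine (enorm_integral_le_lintegral_enorm _).trans (lintegral_mono fun y => ?_)
    rw [enorm_smul, Real.enorm_eq_ofReal_abs]
    gcongr
    exact abs_tentKernel_sub_le x x' y
  rw [edist_eq_enorm_sub]
  refine (enorm_tentExtension_sub_le h hg hx' c).trans
    ((mul_le_mul_right enorm_integral_le _).trans_eq ?_)
  rw [edist_dist, ENNReal.ofReal_mul zero_le_four, mul_assoc 4 C₀, ENNReal.ofReal_mul zero_le_four]
  ring

end TentExtension

section LocalLipschitz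

lemma infDist_le_two_mul_of_mem_ball {X : Type*} [PseudoMetricSpace X] {Γ : Set X} {x x' : X}
    (hx' : x' ∈ ball x (infDist x Γ / 8)) : infDist x Γ ≤ 2 * infDist x' Γ := by
  linarith [infDist_le_infDist_add_dist (s := Γ) (x := x) (y := x'), mem_ball'.1 hx',
    infDist_nonneg (x := x) (s := Γ)]

lemma ball_subset_ball_four_mul_infDist {X : Type*} [PseudoMetricSpace X] {Γ : Set X} {x x' : X}
    (hx' : x' ∈ ball x (infDist x Γ / 8)) :
    ball x' (3 * infDist x' Γ) ⊆ ball x (4 * infDist x Γ) :=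
  ball_subset_ball' <| by
    linarith [infDist_le_infDist_add_dist (s := Γ) (x := x') (y := x), mem_ball.1 hx',
      infDist_nonneg (x := x) (s := Γ)]

variable {X F : Type*} [MetricSpace X] [MeasurableSpace X] [OpensMeasurableSpace X]
  [ProperSpace X] [NormedAddCommGroup F] [NormedSpace ℝ F] [CompleteSpace F] {Γ : Set X}
  {σ : Measure X} {d C₀ : ℝ} {g : X → F} {x : X}

lemma edist_tentExtension_le_of_mem_ball (h : IsAhlforsRegularOn σ Γ d C₀) (hd : 0 ≤ d)
    (hg : LocallyIntegrable g σ) (hx : x ∉ Γ) {x' : X} (hx' : x' ∈ ball x (infDist x Γ / 8)) :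
    edist (tentExtension Γ σ g x') (tentExtension Γ σ g x) ≤
      ENNReal.ofReal (4 * C₀ * 2 ^ (d + 1) * infDist x Γ ^ (-(d + 1))) *
        (∫⁻ y in ball x (4 * infDist x Γ), ‖g y - tentExtension Γ σ g x‖ₑ ∂σ) * edist x' x := by
  have hδ := h.infDist_pos hx
  have hC₀ := h.const_pos
  have le_two_mul := infDist_le_two_mul_of_mem_ball hx'
  have x'_notMem : x' ∉ Γ := fun hmem => by
    rw [infDist_zero_of_mem hmem] at le_two_mul
    linarith
  refine (edist_tentExtension_le h hg hx x'_notMem (ball_subset_ball (by linarith))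
    (ball_subset_ball_four_mul_infDist hx')).trans ?_
  rw [mul_assoc (4 * C₀)]
  gcongr
  exact rpow_neg_le_mul_rpow_neg two_pos hδ le_two_mul (by linarith)

lemma setLIntegral_enorm_sub_tentExtension_le (h : IsAhlforsRegularOn σ Γ d C₀)
    (hg : LocallyIntegrable g σ) (hx : x ∉ Γ) (c : F) :
    ∫⁻ y in ball x (4 * infDist x Γ), ‖g y - tentExtension Γ σ g x‖ₑ ∂σ ≤
      ENNReal.ofReal (1 + 3 * C₀ ^ 2 * 5 ^ d) *
        ∫⁻ y in ball x (4 * infDist x Γ), ‖g y - c‖ₑ ∂σ := by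
  have hδ := h.infDist_pos hx
  have hC₀ := h.const_pos
  set B := ball x (4 * infDist x Γ)
  have measure_le : σ B ≤ ENNReal.ofReal (C₀ * (5 ^ d * infDist x Γ ^ d)) :=
    h.measure_ball_four_mul_infDist_le hx
  have osc_le : ‖tentExtension Γ σ g x - c‖ₑ ≤
      ENNReal.ofReal (3 * C₀ * infDist x Γ ^ (-d)) * ∫⁻ y in B, ‖g y - c‖ₑ ∂σ :=
    (enorm_tentExtension_sub_le_setLIntegral h hg hx c).trans
      (mul_le_mul_right (lintegral_mono_set (ball_subset_ball (by linarith))) _)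
  calc ∫⁻ y in B, ‖g y - tentExtension Γ σ g x‖ₑ ∂σ
      ≤ ∫⁻ y in B, (‖g y - c‖ₑ + ‖tentExtension Γ σ g x - c‖ₑ) ∂σ :=
        lintegral_mono fun y => by
          simpa only [sub_sub_sub_cancel_right] using
            enorm_sub_le (a := g y - c) (b := tentExtension Γ σ g x - c)
    _ = (∫⁻ y in B, ‖g y - c‖ₑ ∂σ) + ‖tentExtension Γ σ g x - c‖ₑ * σ B := by
        rw [lintegral_add_right _ measurable_const, setLIntegral_const]
    _ ≤ (∫⁻ y in B, ‖g y - c‖ₑ ∂σ) +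
          ENNReal.ofReal (3 * C₀ * infDist x Γ ^ (-d)) * (∫⁻ y in B, ‖g y - c‖ₑ ∂σ) *
            ENNReal.ofReal (C₀ * (5 ^ d * infDist x Γ ^ d)) := by gcongr
    _ = ENNReal.ofReal (1 + 3 * C₀ ^ 2 * 5 ^ d) * ∫⁻ y in B, ‖g y - c‖ₑ ∂σ := by
        rw [mul_right_comm, ← ENNReal.ofReal_mul (by positivity),
          ENNReal.ofReal_add zero_le_one (by positivity), ENNReal.ofReal_one, add_mul, one_mul,
          Real.rpow_neg hδ.le]
        congr 3
        field_simp

lemma edist_tentExtension_le_of_mem_ball_of_mem_ball (h : IsAhlforsRegularOn σ Γ d C₀) (hd : 0 ≤ d)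
    (hg : LocallyIntegrable g σ) {p : X} (hp : p ∉ Γ) {x' : X}
    (hx' : x' ∈ ball p (infDist p Γ / 20)) (hx : x ∈ ball p (infDist p Γ / 20)) :
    edist (tentExtension Γ σ g x') (tentExtension Γ σ g x) ≤
      ENNReal.ofReal (4 * C₀ * 2 ^ (d + 1) * (2 ^ (d + 1) * infDist p Γ ^ (-(d + 1)))) *
        (ENNReal.ofReal (1 + 3 * C₀ ^ 2 * 5 ^ d) * ∫⁻ y in ball p (9 * infDist p Γ), ‖g y‖ₑ ∂σ) *
          edist x' x := by
  have hδ := h.infDist_pos hp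
  have hC₀ := h.const_pos
  have le_two_mul : infDist p Γ ≤ 2 * infDist x Γ :=
    infDist_le_two_mul_of_mem_ball (ball_subset_ball (by linarith) hx)
  have infDist_le := infDist_le_infDist_add_dist (s := Γ) (x := p) (y := x)
  have infDist_le' := infDist_le_infDist_add_dist (s := Γ) (x := x) (y := p)
  rw [mem_ball] at hx hx'
  have x_notMem : x ∉ Γ := fun hmem => by
    rw [infDist_zero_of_mem hmem] at le_two_mul
    linarith
  have x'_mem : x' ∈ ball x (infDist x Γ / 8) := by
    rw [mem_ball]
    linarith [dist_triangle_right x' x p, dist_comm p x]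
  have ball_subset : ball x (4 * infDist x Γ) ⊆ ball p (9 * infDist p Γ) :=
    ball_subset_ball' (by linarith)
  refine (edist_tentExtension_le_of_mem_ball h hd hg x_notMem x'_mem).trans ?_
  gcongr ENNReal.ofReal (_ * ?_) * ?_ * _
  · exact rpow_neg_le_mul_rpow_neg two_pos hδ le_two_mul (by linarith)
  · refine (setLIntegral_enorm_sub_tentExtension_le h hg x_notMem 0).trans ?_
    simp only [sub_zero]
    gcongr

lemma locallyLipschitzOn_tentExtension (h : IsAhlforsRegularOn σ Γ d C₀) (hd : 0 ≤ d)
    (hg : LocallyIntegrable g σ) : LocallyLipschitzOn Γᶜ (tentExtension Γ σ g) := by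
  intro p hp
  have hδ := h.infDist_pos hp
  have integral_ne_top : ∫⁻ y in ball p (9 * infDist p Γ), ‖g y‖ₑ ∂σ ≠ ⊤ :=
    ((hg.integrableOn_isCompact (isCompact_closedBall p _)).mono_set ball_subset_closedBall).2.ne
  set K : ℝ≥0∞ :=
    ENNReal.ofReal (4 * C₀ * 2 ^ (d + 1) * (2 ^ (d + 1) * infDist p Γ ^ (-(d + 1)))) *
      (ENNReal.ofReal (1 + 3 * C₀ ^ 2 * 5 ^ d) * ∫⁻ y in ball p (9 * infDist p Γ), ‖g y‖ₑ ∂σ)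
    with hK
  have K_ne_top : K ≠ ⊤ := by finiteness
  refine ⟨K.toNNReal, ball p (infDist p Γ / 20),
    nhdsWithin_le_nhds (ball_mem_nhds p (by positivity)), fun x' hx' x hx => ?_⟩
  rw [ENNReal.coe_toNNReal K_ne_top, hK]
  exact edist_tentExtension_le_of_mem_ball_of_mem_ball h hd hg hp hx' hx

end LocalLipschitz

section Energy

lemma enorm_fderiv_le_of_eventually_edist_le {E F : Type*} [NormedAddCommGroup E]
    [NormedSpace ℝ E] [NormedAddCommGroup F] [NormedSpace ℝ F] {f : E → F} {x : E} {K : ℝ≥0∞}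
    (hf : ∀ᶠ x' in 𝓝 x, edist (f x') (f x) ≤ K * edist x' x) : ‖fderiv ℝ f x‖ₑ ≤ K := by
  obtain rfl | hK := eq_or_ne K ⊤
  · exact le_top
  lift K to ℝ≥0 using hK
  rw [← ofReal_norm, ← ENNReal.ofReal_coe_nnreal]
  refine ENNReal.ofReal_le_ofReal (norm_fderiv_le_of_lip' ℝ K.2 ?_)
  filter_upwards [hf] with x' hx'
  rw [edist_nndist, edist_nndist] at hx'
  rw [← dist_eq_norm, ← dist_eq_norm]
  exact_mod_cast hx'

section Metric

variable {X F : Type*} [MetricSpace X] [MeasurableSpace X] [OpensMeasurableSpace X]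
  [ProperSpace X] [NormedAddCommGroup F] [NormedSpace ℝ F] [CompleteSpace F] {Γ : Set X}
  {σ : Measure X} {d C₀ : ℝ} {g : X → F} {x : X}

lemma setLIntegral_enorm_sub_tentExtension_le_prod (h : IsAhlforsRegularOn σ Γ d C₀)
    (hg : LocallyIntegrable g σ) (hx : x ∉ Γ) :
    ∫⁻ y in ball x (4 * infDist x Γ), ‖g y - tentExtension Γ σ g x‖ₑ ∂σ ≤
      ENNReal.ofReal (3 * C₀ * infDist x Γ ^ (-d)) *
        ∫⁻ q in ball x (4 * infDist x Γ) ×ˢ ball x (4 * infDist x Γ),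
          ‖g q.1 - g q.2‖ₑ ∂(σ.prod σ) := by
  have := h.isLocallyFiniteMeasure
  set B := ball x (4 * infDist x Γ)
  rw [← Measure.prod_restrict,
    lintegral_prod _ (aemeasurable_enorm_sub_prod hg.aestronglyMeasurable.restrict),
    ← lintegral_const_mul' _ _ ENNReal.ofReal_ne_top]
  refine lintegral_mono fun y => ?_
  simp_rw [enorm_sub_rev (g y)]
  exact (enorm_tentExtension_sub_le_setLIntegral h hg hx (g y)).trans <| mul_le_mul_right
    (lintegral_mono_set (ball_subset_ball (by linarith [h.infDist_pos hx]))) _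

lemma sq_setLIntegral_enorm_sub_tentExtension_le (h : IsAhlforsRegularOn σ Γ d C₀)
    (hg : LocallyIntegrable g σ) (hx : x ∉ Γ) :
    (∫⁻ y in ball x (4 * infDist x Γ), ‖g y - tentExtension Γ σ g x‖ₑ ∂σ) ^ 2 ≤
      ENNReal.ofReal ((3 * C₀ ^ 2 * 5 ^ d) ^ 2) *
        ∫⁻ q in ball x (4 * infDist x Γ) ×ˢ ball x (4 * infDist x Γ),
          ‖g q.1 - g q.2‖ₑ ^ 2 ∂(σ.prod σ) := by
  have := h.isLocallyFiniteMeasure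
  have hδ := h.infDist_pos hx
  have hC₀ := h.const_pos
  set B := ball x (4 * infDist x Γ)
  have measure_le : σ B ≤ ENNReal.ofReal (C₀ * (5 ^ d * infDist x Γ ^ d)) :=
    h.measure_ball_four_mul_infDist_le hx
  calc (∫⁻ y in B, ‖g y - tentExtension Γ σ g x‖ₑ ∂σ) ^ 2
      ≤ (ENNReal.ofReal (3 * C₀ * infDist x Γ ^ (-d)) *
          ∫⁻ q in B ×ˢ B, ‖g q.1 - g q.2‖ₑ ∂(σ.prod σ)) ^ 2 := by
        gcongr
        exact setLIntegral_enorm_sub_tentExtension_le_prod h hg hx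
    _ ≤ ENNReal.ofReal (3 * C₀ * infDist x Γ ^ (-d)) ^ 2 *
          (σ B * σ B * ∫⁻ q in B ×ˢ B, ‖g q.1 - g q.2‖ₑ ^ 2 ∂(σ.prod σ)) := by
        rw [mul_pow, ← Measure.prod_prod]
        gcongr
        exact sq_setLIntegral_le_measure_mul
          (aemeasurable_enorm_sub_prod hg.aestronglyMeasurable).restrict
    _ ≤ ENNReal.ofReal (3 * C₀ * infDist x Γ ^ (-d)) ^ 2 *
          (ENNReal.ofReal (C₀ * (5 ^ d * infDist x Γ ^ d)) *
            ENNReal.ofReal (C₀ * (5 ^ d * infDist x Γ ^ d)) *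
              ∫⁻ q in B ×ˢ B, ‖g q.1 - g q.2‖ₑ ^ 2 ∂(σ.prod σ)) := by gcongr
    _ = ENNReal.ofReal ((3 * C₀ ^ 2 * 5 ^ d) ^ 2) *
          ∫⁻ q in B ×ˢ B, ‖g q.1 - g q.2‖ₑ ^ 2 ∂(σ.prod σ) := by
        rw [← sq, ← mul_assoc, ← mul_pow, ← ENNReal.ofReal_mul (by positivity),
          ← ENNReal.ofReal_pow (by positivity), Real.rpow_neg hδ.le]
        congr 3
        field_simp

end Metric

variable {E F : Type*} [NormedAddCommGroup E] [NormedSpace ℝ E] [FiniteDimensional ℝ E]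
  [MeasurableSpace E] [BorelSpace E] [NormedAddCommGroup F] [NormedSpace ℝ F] [CompleteSpace F]
  {Γ : Set E} {σ : Measure E} {d C₀ s : ℝ} {g : E → F}

lemma enorm_fderiv_tentExtension_sq_le (h : IsAhlforsRegularOn σ Γ d C₀) (hd : 0 ≤ d)
    (hg : LocallyIntegrable g σ) {x : E} (hx : x ∉ Γ) :
    ‖fderiv ℝ (tentExtension Γ σ g) x‖ₑ ^ 2 ≤
      ENNReal.ofReal ((12 * C₀ ^ 3 * 2 ^ (d + 1) * 5 ^ d) ^ 2 * infDist x Γ ^ (-(2 * d + 2))) *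
        ∫⁻ q in ball x (4 * infDist x Γ) ×ˢ ball x (4 * infDist x Γ),
          ‖g q.1 - g q.2‖ₑ ^ 2 ∂(σ.prod σ) := by
  have hδ := h.infDist_pos hx
  have hC₀ := h.const_pos
  have := FiniteDimensional.proper ℝ E
  have enorm_fderiv_le : ‖fderiv ℝ (tentExtension Γ σ g) x‖ₑ ≤
      ENNReal.ofReal (4 * C₀ * 2 ^ (d + 1) * infDist x Γ ^ (-(d + 1))) *
        ∫⁻ y in ball x (4 * infDist x Γ), ‖g y - tentExtension Γ σ g x‖ₑ ∂σ := by
    refine enorm_fderiv_le_of_eventually_edist_le ?_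
    filter_upwards [ball_mem_nhds x (show 0 < infDist x Γ / 8 by positivity)] with x' hx'
    exact edist_tentExtension_le_of_mem_ball h hd hg hx hx'
  calc ‖fderiv ℝ (tentExtension Γ σ g) x‖ₑ ^ 2
      ≤ ENNReal.ofReal (4 * C₀ * 2 ^ (d + 1) * infDist x Γ ^ (-(d + 1))) ^ 2 *
          (∫⁻ y in ball x (4 * infDist x Γ), ‖g y - tentExtension Γ σ g x‖ₑ ∂σ) ^ 2 := by
        rw [← mul_pow]
        gcongr
    _ ≤ ENNReal.ofReal (4 * C₀ * 2 ^ (d + 1) * infDist x Γ ^ (-(d + 1))) ^ 2 *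
          (ENNReal.ofReal ((3 * C₀ ^ 2 * 5 ^ d) ^ 2) *
            ∫⁻ q in ball x (4 * infDist x Γ) ×ˢ ball x (4 * infDist x Γ),
              ‖g q.1 - g q.2‖ₑ ^ 2 ∂(σ.prod σ)) := by
        gcongr
        exact sq_setLIntegral_enorm_sub_tentExtension_le h hg hx
    _ = _ := by
        rw [← mul_assoc, ← ENNReal.ofReal_pow (by positivity), ← ENNReal.ofReal_mul (by positivity),
          show -(2 * d + 2) = -(d + 1) + -(d + 1) by ring, Real.rpow_add hδ]
        congr 2
        ring

variable (μ : Measure E) [μ.IsAddHaarMeasure]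

lemma setLIntegral_infDist_rpow_neg_le (hs : 0 ≤ s) {y z : E} (hy : y ∈ Γ) (hyz : y ≠ z) :
    ∫⁻ x in {x | y ∈ ball x (4 * infDist x Γ) ∧ z ∈ ball x (4 * infDist x Γ)},
        ENNReal.ofReal (infDist x Γ ^ (-(Module.finrank ℝ E + s))) ∂μ ≤
      ENNReal.ofReal (4 ^ (Module.finrank ℝ E + s) * 8 ^ s) *
        (∫⁻ x in (ball 0 1)ᶜ, ENNReal.ofReal (‖x‖ ^ (-(Module.finrank ℝ E + s))) ∂μ) /
          ENNReal.ofReal (dist y z ^ s) := by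
  set p := Module.finrank ℝ E + s with hp
  have hr : 0 < dist y z / 8 := by linarith [dist_pos.2 hyz]
  have hW : MeasurableSet {x | y ∈ ball x (4 * infDist x Γ) ∧ z ∈ ball x (4 * infDist x Γ)} := by
    simp only [mem_ball]
    measurability
  have le_dist (x) (hx : y ∈ ball x (4 * infDist x Γ) ∧ z ∈ ball x (4 * infDist x Γ)) :
      dist y z / 8 ≤ dist x y := by
    linarith [dist_triangle_right y z x, mem_ball.1 hx.1, mem_ball.1 hx.2,
      infDist_le_dist_of_mem (x := x) hy]
  have infDist_rpow_le (x) (hx : y ∈ ball x (4 * infDist x Γ) ∧ z ∈ ball x (4 * infDist x Γ)) :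
      infDist x Γ ^ (-p) ≤ 4 ^ p * dist x y ^ (-p) :=
    rpow_neg_le_mul_rpow_neg four_pos (hr.trans_le (le_dist x hx)) (mem_ball'.1 hx.1).le
      (by positivity)
  calc _ ≤ ∫⁻ x in {x | y ∈ ball x (4 * infDist x Γ) ∧ z ∈ ball x (4 * infDist x Γ)},
          ENNReal.ofReal (4 ^ p) * ENNReal.ofReal (dist x y ^ (-p)) ∂μ := by
        refine setLIntegral_mono' hW fun x hx => ?_
        rw [← ENNReal.ofReal_mul (by positivity)]
        exact ENNReal.ofReal_le_ofReal (infDist_rpow_le x hx)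
    _ ≤ ENNReal.ofReal (4 ^ p) *
          ∫⁻ x in (ball y (dist y z / 8))ᶜ, ENNReal.ofReal (dist x y ^ (-p)) ∂μ := by
        rw [lintegral_const_mul' _ _ ENNReal.ofReal_ne_top]
        exact mul_le_mul_right (lintegral_mono_set fun x hx => not_lt.2 (le_dist x hx)) _
    _ = _ := by
        have rpow_eq : (dist y z / 8) ^ (Module.finrank ℝ E + -p) = 8 ^ s * (dist y z ^ s)⁻¹ := by
          rw [hp, neg_add, add_neg_cancel_left, Real.rpow_neg hr.le,
            Real.div_rpow dist_nonneg (by norm_num), inv_div, div_eq_mul_inv]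
        rw [setLIntegral_compl_ball_dist_rpow_eq _ _ hr, rpow_eq, ENNReal.div_eq_inv_mul,
          ENNReal.ofReal_mul (by positivity), ENNReal.ofReal_mul (by positivity),
          ENNReal.ofReal_inv_of_pos (Real.rpow_pos_of_pos (dist_pos.2 hyz) s)]
        ring

lemma setLIntegral_infDist_rpow_mul_enorm_fderiv_sq_le_prod (h : IsAhlforsRegularOn σ Γ d C₀)
    (hd : 0 ≤ d) (hg : LocallyIntegrable g σ) :
    ∫⁻ x in Γᶜ, ENNReal.ofReal (infDist x Γ ^ (2 * d + 2 - (Module.finrank ℝ E + s))) *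
        ‖fderiv ℝ (tentExtension Γ σ g) x‖ₑ ^ 2 ∂μ ≤
      ENNReal.ofReal ((12 * C₀ ^ 3 * 2 ^ (d + 1) * 5 ^ d) ^ 2) *
        ∫⁻ q, (∫⁻ x in {x | q.1 ∈ ball x (4 * infDist x Γ) ∧ q.2 ∈ ball x (4 * infDist x Γ)},
          ENNReal.ofReal (infDist x Γ ^ (-(Module.finrank ℝ E + s))) ∂μ) *
            ‖g q.1 - g q.2‖ₑ ^ 2 ∂(σ.prod σ) := by
  have := FiniteDimensional.proper ℝ E
  have := h.isLocallyFiniteMeasure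
  set W : Set (E × E × E) := {w | w.2.1 ∈ ball w.1 (4 * infDist w.1 Γ) ∧
    w.2.2 ∈ ball w.1 (4 * infDist w.1 Γ)}
  have hW : MeasurableSet W := by
    simp only [W, mem_ball]
    measurability
  have pointwise (x) (hx : x ∈ Γᶜ) :
      ENNReal.ofReal (infDist x Γ ^ (2 * d + 2 - (Module.finrank ℝ E + s))) *
          ‖fderiv ℝ (tentExtension Γ σ g) x‖ₑ ^ 2 ≤
        ENNReal.ofReal ((12 * C₀ ^ 3 * 2 ^ (d + 1) * 5 ^ d) ^ 2) *
          (ENNReal.ofReal (infDist x Γ ^ (-(Module.finrank ℝ E + s))) *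
            ∫⁻ q in {q | (x, q) ∈ W}, ‖g q.1 - g q.2‖ₑ ^ 2 ∂(σ.prod σ)) := by
    have hδ := h.infDist_pos hx
    have hC₀ := h.const_pos
    refine (mul_le_mul_right (enorm_fderiv_tentExtension_sq_le h hd hg hx) _).trans_eq ?_
    rw [← mul_assoc, ← mul_assoc, ← ENNReal.ofReal_mul (by positivity),
      ← ENNReal.ofReal_mul (by positivity), mul_left_comm, ← Real.rpow_add hδ]
    congr 4
    ring
  calc _ ≤ _ := setLIntegral_mono' h.isClosed.measurableSet.compl pointwise
    _ = ENNReal.ofReal ((12 * C₀ ^ 3 * 2 ^ (d + 1) * 5 ^ d) ^ 2) *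
          ∫⁻ q, (∫⁻ x in {x | (x, q) ∈ W}, ENNReal.ofReal
            (infDist x Γ ^ (-(Module.finrank ℝ E + s))) ∂(μ.restrict Γᶜ)) *
              ‖g q.1 - g q.2‖ₑ ^ 2 ∂(σ.prod σ) := by
        rw [lintegral_const_mul' _ _ ENNReal.ofReal_ne_top,
          lintegral_mul_setLIntegral_section_swap hW (Measurable.aemeasurable (by fun_prop))
            ((aemeasurable_enorm_sub_prod hg.aestronglyMeasurable).pow_const 2)]
    _ ≤ _ := mul_le_mul_right (lintegral_mono fun q => mul_le_mul_left
        (lintegral_mono' (Measure.restrict_mono le_rfl Measure.restrict_le_self) le_rfl) _) _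

theorem setLIntegral_infDist_rpow_mul_enorm_fderiv_sq_le (h : IsAhlforsRegularOn σ Γ d C₀)
    (hd : 0 ≤ d) (hs : 0 ≤ s) (hg : LocallyIntegrable g σ) :
    ∫⁻ x in Γᶜ, ENNReal.ofReal (infDist x Γ ^ (2 * d + 2 - (Module.finrank ℝ E + s))) *
        ‖fderiv ℝ (tentExtension Γ σ g) x‖ₑ ^ 2 ∂μ ≤
      ENNReal.ofReal ((12 * C₀ ^ 3 * 2 ^ (d + 1) * 5 ^ d) ^ 2) *
        (ENNReal.ofReal (4 ^ (Module.finrank ℝ E + s) * 8 ^ s) *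
          ∫⁻ x in (ball 0 1)ᶜ, ENNReal.ofReal (‖x‖ ^ (-(Module.finrank ℝ E + s))) ∂μ) *
        ∫⁻ x, gagliardoDensity s σ g x ∂σ := by
  have := FiniteDimensional.proper ℝ E
  have := h.isLocallyFiniteMeasure
  have hgm := hg.aestronglyMeasurable
  refine (setLIntegral_infDist_rpow_mul_enorm_fderiv_sq_le_prod μ h hd hg).trans ?_
  simp_rw [mul_assoc (ENNReal.ofReal ((12 * C₀ ^ 3 * 2 ^ (d + 1) * 5 ^ d) ^ 2)), gagliardoDensity]
  gcongr ENNReal.ofReal _ * ?_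
  rw [← lintegral_prod _ (aemeasurable_enorm_sub_sq_div_prod hgm s),
    ← lintegral_const_mul'' _ (aemeasurable_enorm_sub_sq_div_prod hgm s)]
  have fst_mem : ∀ᵐ q ∂(σ.prod σ), q.1 ∈ Γ := Measure.quasiMeasurePreserving_fst.ae h.ae_mem
  refine lintegral_mono_ae (fst_mem.mono fun q hq => ?_)
  obtain heq | hne := eq_or_ne q.1 q.2
  · simp [heq]
  · refine (mul_le_mul_left (setLIntegral_infDist_rpow_neg_le μ hs hq hne) _).trans_eq ?_
    simp only [div_eq_mul_inv]
    ring

end Energy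

section Trace

lemma tendsto_zero_of_tendsto_sq_zero {α : Type*} {l : Filter α} {f : α → ℝ≥0∞}
    (hf : Tendsto (fun a => f a ^ 2) l (𝓝 0)) : Tendsto f l (𝓝 0) := by
  have sqrt_tendsto := hf.ennrpow_const (1 / 2)
  simpa [← ENNReal.rpow_natCast_mul] using sqrt_tendsto

variable {E F : Type*} [NormedAddCommGroup E] [NormedSpace ℝ E] [FiniteDimensional ℝ E]
  [MeasurableSpace E] [BorelSpace E] [NormedAddCommGroup F] [NormedSpace ℝ F] [CompleteSpace F]
  {Γ : Set E} {σ : Measure E} {d C₀ s : ℝ} {g : E → F} {μ : Measure E}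

lemma aestronglyMeasurable_tentExtension (h : IsAhlforsRegularOn σ Γ d C₀) (hd : 0 ≤ d)
    (hg : LocallyIntegrable g σ) (hΓ : μ Γ = 0) :
    AEStronglyMeasurable (tentExtension Γ σ g) μ := by
  have := FiniteDimensional.proper ℝ E
  rw [← Measure.restrict_eq_self_of_ae_mem (measure_eq_zero_iff_ae_notMem.1 hΓ)]
  exact (locallyLipschitzOn_tentExtension h hd hg).continuousOn.aestronglyMeasurable
    h.isClosed.measurableSet.compl

variable [μ.IsAddHaarMeasure] {x : E}

lemma setLIntegral_ball_infDist_rpow_neg_le (hd : 0 ≤ d) (hx : x ∈ Γ) {z : E} (hz : z ∈ Γ)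
    {ρ : ℝ} (hρ : 0 < ρ) :
    ∫⁻ y in {y | z ∈ ball y (3 * infDist y Γ)}, ENNReal.ofReal (infDist y Γ ^ (-d))
        ∂(μ.restrict (ball x ρ)) ≤
      ENNReal.ofReal (3 ^ Module.finrank ℝ E * ρ ^ (Module.finrank ℝ E - d)) *
        ∫⁻ y in ball 0 1, ENNReal.ofReal (‖y‖ ^ (-d)) ∂μ := by
  have hW : MeasurableSet {y | z ∈ ball y (3 * infDist y Γ)} := by
    simp only [mem_ball]
    measurability
  rw [Measure.restrict_restrict hW]
  set W := {y | z ∈ ball y (3 * infDist y Γ)} ∩ ball x ρ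
  have subset_ball : W ⊆ ball z (3 * ρ) := fun y hy => by
    have hyz := mem_ball'.1 hy.1
    have hyx := mem_ball.1 hy.2
    exact mem_ball.2 (by linarith [infDist_le_dist_of_mem (x := y) hx])
  have infDist_rpow_le (y) (hy : y ∈ W) : infDist y Γ ^ (-d) ≤ 3 ^ d * dist y z ^ (-d) := by
    have hyz := mem_ball'.1 hy.1
    have dist_pos : 0 < dist y z := by
      linarith [infDist_le_dist_of_mem (x := y) hz, dist_nonneg (x := y) (y := z)]
    exact rpow_neg_le_mul_rpow_neg three_pos dist_pos hyz.le hd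
  calc _ ≤ ∫⁻ y in W, ENNReal.ofReal (3 ^ d) * ENNReal.ofReal (dist y z ^ (-d)) ∂μ := by
        refine setLIntegral_mono' (hW.inter measurableSet_ball) fun y hy => ?_
        rw [← ENNReal.ofReal_mul (by positivity)]
        exact ENNReal.ofReal_le_ofReal (infDist_rpow_le y hy)
    _ ≤ ENNReal.ofReal (3 ^ d) *
          ∫⁻ y in ball z (3 * ρ), ENNReal.ofReal (dist y z ^ (-d)) ∂μ := by
        rw [lintegral_const_mul' _ _ ENNReal.ofReal_ne_top]
        gcongr
    _ = _ := by
        rw [setLIntegral_ball_dist_rpow_eq _ _ (by positivity), ← mul_assoc,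
          ← ENNReal.ofReal_mul (by positivity), ← sub_eq_add_neg,
          Real.mul_rpow (by norm_num) hρ.le, ← mul_assoc, ← Real.rpow_add three_pos,
          add_sub_cancel, Real.rpow_natCast]

lemma setLIntegral_ball_enorm_tentExtension_sub_le_swap (h : IsAhlforsRegularOn σ Γ d C₀)
    (hg : LocallyIntegrable g σ) (hΓ : μ Γ = 0) (hx : x ∈ Γ) (c : F) (ρ : ℝ) :
    ∫⁻ y in ball x ρ, ‖tentExtension Γ σ g y - c‖ₑ ∂μ ≤
      ENNReal.ofReal (3 * C₀) * ∫⁻ z in ball x (4 * ρ),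
        (∫⁻ y in {y | z ∈ ball y (3 * infDist y Γ)}, ENNReal.ofReal (infDist y Γ ^ (-d))
          ∂(μ.restrict (ball x ρ))) * ‖g z - c‖ₑ ∂σ := by
  have hC₀ := h.const_pos
  have := FiniteDimensional.proper ℝ E
  have := h.isLocallyFiniteMeasure
  set W : Set (E × E) := {w | w.2 ∈ ball w.1 (3 * infDist w.1 Γ)}
  have hW : MeasurableSet W := by
    simp only [W, mem_ball]
    measurability
  have pointwise (y) (hyx : y ∈ ball x ρ) (hy : y ∉ Γ) : ‖tentExtension Γ σ g y - c‖ₑ ≤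
      ENNReal.ofReal (3 * C₀) * (ENNReal.ofReal (infDist y Γ ^ (-d)) *
        ∫⁻ z in {z | (y, z) ∈ W}, ‖g z - c‖ₑ ∂(σ.restrict (ball x (4 * ρ)))) := by
    have ball_subset : ball y (3 * infDist y Γ) ⊆ ball x (4 * ρ) := ball_subset_ball' <| by
      linarith [mem_ball.1 hyx, infDist_le_dist_of_mem (x := y) hx]
    change _ ≤ _ * (_ * ∫⁻ z in ball y (3 * infDist y Γ), _ ∂_)
    rw [Measure.restrict_restrict measurableSet_ball, inter_eq_self_of_subset_left ball_subset,
      ← mul_assoc, ← ENNReal.ofReal_mul (by positivity)]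
    exact enorm_tentExtension_sub_le_setLIntegral h hg hy c
  have notMem_ae : ∀ᵐ y ∂(μ.restrict (ball x ρ)), y ∉ Γ :=
    ae_restrict_of_ae (measure_eq_zero_iff_ae_notMem.1 hΓ)
  have meas : AEMeasurable (fun z => ‖g z - c‖ₑ) (σ.restrict (ball x (4 * ρ))) :=
    (hg.aestronglyMeasurable.restrict.sub aestronglyMeasurable_const).enorm
  calc _ ≤ _ := lintegral_mono_ae <| by
        filter_upwards [notMem_ae, ae_restrict_mem measurableSet_ball] with y hy hyx
        exact pointwise y hyx hy
    _ = _ := by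
        rw [lintegral_const_mul' _ _ ENNReal.ofReal_ne_top,
          lintegral_mul_setLIntegral_section_swap hW (Measurable.aemeasurable (by fun_prop)) meas]
        rfl

lemma setLIntegral_ball_enorm_tentExtension_sub_le (h : IsAhlforsRegularOn σ Γ d C₀) (hd : 0 ≤ d)
    (hg : LocallyIntegrable g σ) (hΓ : μ Γ = 0) (hx : x ∈ Γ) (c : F) {ρ : ℝ} (hρ : 0 < ρ) :
    ∫⁻ y in ball x ρ, ‖tentExtension Γ σ g y - c‖ₑ ∂μ ≤
      ENNReal.ofReal (3 ^ (Module.finrank ℝ E + 1) * C₀) *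
        (∫⁻ y in ball 0 1, ENNReal.ofReal (‖y‖ ^ (-d)) ∂μ) *
        (ENNReal.ofReal (ρ ^ (Module.finrank ℝ E - d)) *
          ∫⁻ z in ball x (4 * ρ), ‖g z - c‖ₑ ∂σ) := by
  have meas : AEMeasurable (fun z => ‖g z - c‖ₑ) (σ.restrict (ball x (4 * ρ))) :=
    (hg.aestronglyMeasurable.restrict.sub aestronglyMeasurable_const).enorm
  calc _ ≤ _ := setLIntegral_ball_enorm_tentExtension_sub_le_swap h hg hΓ hx c ρ
    _ ≤ ENNReal.ofReal (3 * C₀) * ∫⁻ z in ball x (4 * ρ),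
          ENNReal.ofReal (3 ^ Module.finrank ℝ E * ρ ^ (Module.finrank ℝ E - d)) *
            (∫⁻ y in ball 0 1, ENNReal.ofReal (‖y‖ ^ (-d)) ∂μ) * ‖g z - c‖ₑ ∂σ :=
        mul_le_mul_right (lintegral_mono_ae <| (ae_restrict_of_ae h.ae_mem).mono fun z hz =>
          mul_le_mul_left (setLIntegral_ball_infDist_rpow_neg_le hd hx hz hρ) _) _
    _ = _ := by
        rw [lintegral_const_mul'' _ meas, pow_succ, mul_assoc (3 ^ _),
          ENNReal.ofReal_mul (p := 3 ^ _) (by positivity),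
          ENNReal.ofReal_mul (p := 3 ^ _) (by positivity)]
        ring

lemma locallyIntegrable_tentExtension (h : IsAhlforsRegularOn σ Γ d C₀) (hd : 0 ≤ d)
    (hdE : d < Module.finrank ℝ E) (hg : LocallyIntegrable g σ) (hΓ : μ Γ = 0) :
    LocallyIntegrable (tentExtension Γ σ g) μ := by
  intro x
  have := FiniteDimensional.proper ℝ E
  obtain ⟨p, hp⟩ := h.nonempty
  have hr : 0 < dist x p + 1 := by positivity
  refine ⟨ball p (dist x p + 1), isOpen_ball.mem_nhds (by simp),
    (aestronglyMeasurable_tentExtension h hd hg hΓ).restrict, ?_⟩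
  have integral_lt_top : ∫⁻ z in ball p (4 * (dist x p + 1)), ‖g z‖ₑ ∂σ < ⊤ :=
    ((hg.integrableOn_isCompact (isCompact_closedBall p _)).mono_set ball_subset_closedBall).2
  have kernel_lt_top := setLIntegral_unitBall_norm_rpow_neg_lt_top (μ := μ) hd hdE
  have le := setLIntegral_ball_enorm_tentExtension_sub_le h hd hg hΓ hp 0 hr
  simp only [sub_zero] at le
  exact le.trans_lt (by finiteness)

lemma laverage_ball_enorm_tentExtension_sub_le (h : IsAhlforsRegularOn σ Γ d C₀) (hd : 0 ≤ d)
    (hg : LocallyIntegrable g σ) (hΓ : μ Γ = 0) (hx : x ∈ Γ) (c : F) {ρ : ℝ} (hρ : 0 < ρ) :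
    ⨍⁻ y in ball x ρ, ‖tentExtension Γ σ g y - c‖ₑ ∂μ ≤
      ENNReal.ofReal (3 ^ (Module.finrank ℝ E + 1) * C₀) *
        ((∫⁻ y in ball 0 1, ENNReal.ofReal (‖y‖ ^ (-d)) ∂μ) / μ (ball 0 1)) *
        (ENNReal.ofReal (ρ ^ (-d)) * ∫⁻ z in ball x (4 * ρ), ‖g z - c‖ₑ ∂σ) := by
  have rpow_eq : ENNReal.ofReal (ρ ^ (Module.finrank ℝ E - d)) =
      ENNReal.ofReal (ρ ^ Module.finrank ℝ E) * ENNReal.ofReal (ρ ^ (-d)) := by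
    rw [sub_eq_add_neg, Real.rpow_add hρ, Real.rpow_natCast, ENNReal.ofReal_mul (by positivity)]
  have ρ_pow_ne_zero : ENNReal.ofReal (ρ ^ Module.finrank ℝ E) ≠ 0 :=
    (ENNReal.ofReal_pos.2 (by positivity)).ne'
  rw [setLAverage_eq, Measure.addHaar_ball_of_pos μ x hρ]
  refine (ENNReal.div_le_div_right
    (setLIntegral_ball_enorm_tentExtension_sub_le h hd hg hΓ hx c hρ) _).trans_eq ?_
  rw [rpow_eq, mul_assoc (ENNReal.ofReal (ρ ^ Module.finrank ℝ E)), mul_left_comm,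
    ENNReal.mul_div_mul_left _ _ ρ_pow_ne_zero ENNReal.ofReal_ne_top]
  simp only [div_eq_mul_inv]
  ring

lemma sq_laverage_ball_enorm_tentExtension_sub_le (h : IsAhlforsRegularOn σ Γ d C₀) (hd : 0 ≤ d)
    (hs : 0 ≤ s) (hg : LocallyIntegrable g σ) (hΓ : μ Γ = 0) (hx : x ∈ Γ) {ρ : ℝ} (hρ : 0 < ρ) :
    (⨍⁻ y in ball x ρ, ‖tentExtension Γ σ g y - g x‖ₑ ∂μ) ^ 2 ≤
      (ENNReal.ofReal (3 ^ (Module.finrank ℝ E + 1) * C₀) *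
        ((∫⁻ y in ball 0 1, ENNReal.ofReal (‖y‖ ^ (-d)) ∂μ) / μ (ball 0 1))) ^ 2 *
        (ENNReal.ofReal (C₀ * 4 ^ (d + s)) * ENNReal.ofReal (ρ ^ (s - d)) *
          gagliardoDensity s σ g x) := by
  have hC₀ := h.const_pos
  calc _ ≤ _ := pow_le_pow_left' (laverage_ball_enorm_tentExtension_sub_le h hd hg hΓ hx _ hρ) 2
    _ ≤ _ * (ENNReal.ofReal (ρ ^ (-d)) ^ 2 * (ENNReal.ofReal (C₀ * (4 * ρ) ^ d) *
          (ENNReal.ofReal ((4 * ρ) ^ s) * gagliardoDensity s σ g x))) := by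
        rw [mul_pow _ (ENNReal.ofReal (ρ ^ (-d)) * _), mul_pow (ENNReal.ofReal (ρ ^ (-d)))]
        gcongr _ * (_ * ?_)
        exact (sq_setLIntegral_ball_enorm_sub_le hs hg.aestronglyMeasurable x
          (by positivity)).trans (mul_le_mul_left (h.measure_ball_le x hx _ (by positivity)) _)
    _ = _ := by
        rw [← mul_assoc (ENNReal.ofReal (C₀ * (4 * ρ) ^ d)),
          ← mul_assoc (ENNReal.ofReal (ρ ^ (-d)) ^ 2),
          ← ENNReal.ofReal_pow (by positivity), ← ENNReal.ofReal_mul (by positivity),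
          ← ENNReal.ofReal_mul (by positivity), ← ENNReal.ofReal_mul (by positivity)]
        congr 3
        rw [Real.mul_rpow (by norm_num) hρ.le, Real.mul_rpow (by norm_num) hρ.le,
          Real.rpow_add (by norm_num), Real.rpow_sub hρ, Real.rpow_neg hρ.le]
        field_simp

lemma sq_edist_average_ball_tentExtension_le (h : IsAhlforsRegularOn σ Γ d C₀) (hd : 0 ≤ d)
    (hdE : d < Module.finrank ℝ E) (hs : 0 ≤ s) (hg : LocallyIntegrable g σ) (hΓ : μ Γ = 0)
    (hx : x ∈ Γ) {ρ : ℝ} (hρ : 0 < ρ) :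
    edist (⨍ y in ball x ρ, tentExtension Γ σ g y ∂μ) (g x) ^ 2 ≤
      (ENNReal.ofReal (3 ^ (Module.finrank ℝ E + 1) * C₀) *
        ((∫⁻ y in ball 0 1, ENNReal.ofReal (‖y‖ ^ (-d)) ∂μ) / μ (ball 0 1))) ^ 2 *
        (ENNReal.ofReal (C₀ * 4 ^ (d + s)) * ENNReal.ofReal (ρ ^ (s - d)) *
          gagliardoDensity s σ g x) := by
  have := FiniteDimensional.proper ℝ E
  have : NeZero (μ.restrict (ball x ρ)) :=
    ⟨Measure.restrict_eq_zero.not.2 (measure_ball_pos μ x hρ).ne'⟩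
  have : IsFiniteMeasure (μ.restrict (ball x ρ)) :=
    isFiniteMeasure_restrict.2 measure_ball_lt_top.ne
  have integrableOn : IntegrableOn (tentExtension Γ σ g) (ball x ρ) μ :=
    ((locallyIntegrable_tentExtension h hd hdE hg hΓ).integrableOn_isCompact
      (isCompact_closedBall x ρ)).mono_set ball_subset_closedBall
  exact (pow_le_pow_left' (edist_average_le_laverage integrableOn (g x)) 2).trans
    (sq_laverage_ball_enorm_tentExtension_sub_le h hd hs hg hΓ hx hρ)

theorem tendsto_average_ball_tentExtension (h : IsAhlforsRegularOn σ Γ d C₀) (hd : 0 ≤ d)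
    (hdE : d < Module.finrank ℝ E) (hds : d < s) (hg : LocallyIntegrable g σ) (hΓ : μ Γ = 0)
    (hx : x ∈ Γ) (hgx : gagliardoDensity s σ g x ≠ ⊤) :
    Tendsto (fun ρ => ⨍ y in ball x ρ, tentExtension Γ σ g y ∂μ) (𝓝[>] 0) (𝓝 (g x)) := by
  set K : ℝ≥0∞ := ENNReal.ofReal (3 ^ (Module.finrank ℝ E + 1) * C₀) *
    ((∫⁻ y in ball 0 1, ENNReal.ofReal (‖y‖ ^ (-d)) ∂μ) / μ (ball 0 1))
  have K_ne_top : K ≠ ⊤ := by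
    have kernel_lt_top := setLIntegral_unitBall_norm_rpow_neg_lt_top (μ := μ) hd hdE
    have ball_ne_zero : μ (ball (0 : E) 1) ≠ 0 := (measure_ball_pos μ 0 one_pos).ne'
    finiteness
  have bound_tendsto : Tendsto (fun ρ : ℝ => K ^ 2 * (ENNReal.ofReal (C₀ * 4 ^ (d + s)) *
      ENNReal.ofReal (ρ ^ (s - d)) * gagliardoDensity s σ g x)) (𝓝[>] 0) (𝓝 0) := by
    have rpow_tendsto : Tendsto (fun ρ : ℝ => ρ ^ (s - d)) (𝓝[>] 0) (𝓝 0) :=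
      tendsto_nhdsWithin_of_tendsto_nhds <| by
        simpa [(sub_pos.2 hds).ne'] using
          (Real.continuous_rpow_const (sub_pos.2 hds).le).tendsto 0
    simpa using ENNReal.Tendsto.const_mul (ENNReal.Tendsto.mul_const
      (ENNReal.Tendsto.const_mul (ENNReal.tendsto_ofReal rpow_tendsto)
        (.inr ENNReal.ofReal_ne_top)) (.inr hgx)) (.inr (ENNReal.pow_ne_top K_ne_top))
  refine tendsto_iff_edist_tendsto_0.2 (tendsto_zero_of_tendsto_sq_zero ?_)
  refine tendsto_of_tendsto_of_tendsto_of_le_of_le' tendsto_const_nhds bound_tendsto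
    (.of_forall fun _ => zero_le) ?_
  filter_upwards [self_mem_nhdsWithin] with ρ hρ
  exact sq_edist_average_ball_tentExtension_le h hd hdE (hd.trans hds.le) hg hΓ hx hρ

end Trace

section ExtensionTheorem

lemma ofReal_norm_sq {F : Type*} [SeminormedAddCommGroup F] (a : F) :
    ENNReal.ofReal (‖a‖ ^ 2) = ‖a‖ₑ ^ 2 := by
  rw [ENNReal.ofReal_pow (norm_nonneg a), ofReal_norm]

variable {n : ℕ} {d C₀ : ℝ} {Γ : Set (Euc n)} {σ : Measure (Euc n)} {g : Euc n → ℝ}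

lemma setLIntegral_measW_eq {s : Set (Euc n)} (hs : MeasurableSet s) {f : Euc n → ℝ≥0∞}
    (hf : Measurable f) :
    ∫⁻ x in s, f x ∂(measW n d Γ) =
      ∫⁻ x in s, ENNReal.ofReal (infDist x Γ ^ (d + 1 - (n : ℝ))) * f x := by
  have weight_meas : Measurable fun x => ENNReal.ofReal (weightW n d Γ x) := by
    unfold weightW
    fun_prop
  exact setLIntegral_withDensity_eq_setLIntegral_mul _ weight_meas hf hs

/-- The bound obtained for the squared norm of the extension operator: the square of the constant
in the gradient estimate times the constant of the kernel integral that Fubini produces. -/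
def extensionConst (n : ℕ) (d C₀ : ℝ) : ℝ≥0∞ :=
  ENNReal.ofReal ((12 * C₀ ^ 3 * 2 ^ (d + 1) * 5 ^ d) ^ 2) *
    (ENNReal.ofReal (4 ^ (n + (d + 1)) * 8 ^ (d + 1)) *
      ∫⁻ x in (ball (0 : Euc n) 1)ᶜ, ENNReal.ofReal (‖x‖ ^ (-(n + (d + 1)))))

lemma extensionConst_ne_top (n : ℕ) (hd : 0 ≤ d) (C₀ : ℝ) : extensionConst n d C₀ ≠ ⊤ := by
  have kernel_lt_top : ∫⁻ x in (ball (0 : Euc n) 1)ᶜ,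
      ENNReal.ofReal (‖x‖ ^ (-(n + (d + 1)))) < ⊤ :=
    setLIntegral_compl_unitBall_norm_rpow_neg_lt_top (by rw [finrank_euclideanSpace_fin]; linarith)
  unfold extensionConst
  finiteness

lemma exists_extensionConst_rpow_half_le (n : ℕ) (hd : 0 ≤ d) (C₀ : ℝ) :
    ∃ C : ℝ, 0 < C ∧ extensionConst n d C₀ ^ ((1 : ℝ) / 2) ≤ ENNReal.ofReal C := by
  have sqrt_ne_top : extensionConst n d C₀ ^ ((1 : ℝ) / 2) ≠ ⊤ :=
    ENNReal.rpow_ne_top_of_nonneg (by norm_num) (extensionConst_ne_top n hd C₀)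
  refine ⟨(extensionConst n d C₀ ^ ((1 : ℝ) / 2)).toReal + 1, by positivity, ?_⟩
  exact (ENNReal.le_ofReal_iff_toReal_le sqrt_ne_top (by positivity)).2 (by linarith)

lemma setLIntegral_norm_gradient_tentExtension_sq_measW_le (h : IsAhlforsRegularOn σ Γ d C₀)
    (hd : 0 ≤ d) (hg : LocallyIntegrable g σ) :
    ∫⁻ x in Γᶜ, ENNReal.ofReal (‖gradient (tentExtension Γ σ g) x‖ ^ 2) ∂(measW n d Γ) ≤
      extensionConst n d C₀ * ∫⁻ x, gagliardoDensity (d + 1) σ g x ∂σ := by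
  have energy_le := setLIntegral_infDist_rpow_mul_enorm_fderiv_sq_le volume h hd
    (show 0 ≤ d + 1 by linarith) hg
  rw [finrank_euclideanSpace_fin, show 2 * d + 2 - (n + (d + 1)) = d + 1 - n by ring] at energy_le
  rw [setLIntegral_measW_eq h.isClosed.measurableSet.compl
    ((measurable_gradient _).norm.pow_const 2).ennreal_ofReal]
  simp only [norm_gradient, ofReal_norm_sq]
  exact energy_le

lemma memW_tentExtension (h : IsAhlforsRegularOn σ Γ d C₀) (hd : 0 ≤ d)
    (hg : LocallyIntegrable g σ) (hgσ : ∫⁻ x, gagliardoDensity (d + 1) σ g x ∂σ < ⊤) :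
    MemW n d Γ (tentExtension Γ σ g) (gradient (tentExtension Γ σ g)) where
  locInt := (locallyLipschitzOn_tentExtension h hd hg).continuousOn.locallyIntegrableOn
    h.isClosed.measurableSet.compl
  gradLocInt := locallyIntegrableOn_gradient_of_locallyLipschitzOn h.isClosed.isOpen_compl
    (locallyLipschitzOn_tentExtension h hd hg)
  isGrad := isDistribGradOn_gradient_of_locallyLipschitzOn h.isClosed.isOpen_compl
    (locallyLipschitzOn_tentExtension h hd hg)
  l2 := (setLIntegral_norm_gradient_tentExtension_sq_measW_le h hd hg).trans_lt
    (ENNReal.mul_lt_top (extensionConst_ne_top n hd C₀).lt_top hgσ)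

lemma ae_hasTraceAt_tentExtension (h : IsAhlforsRegularOn σ Γ d C₀) (hd : 0 ≤ d) (hdn : d < n)
    (hg : LocallyIntegrable g σ) (hgσ : ∫⁻ x, gagliardoDensity (d + 1) σ g x ∂σ < ⊤)
    (hΓ : volume Γ = 0) : ∀ᵐ x ∂σ, HasTraceAt (tentExtension Γ σ g) x (g x) := by
  have := h.isLocallyFiniteMeasure
  filter_upwards [h.ae_mem, ae_lt_top' (aemeasurable_gagliardoDensity hg.aestronglyMeasurable)
    hgσ.ne] with x hx hgx
  exact tendsto_average_ball_tentExtension h hd (by rwa [finrank_euclideanSpace_fin])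
    (lt_add_one d) hg hΓ hx hgx.ne

end ExtensionTheorem

theorem statement10_general (n : ℕ) (d C₀ : ℝ) (hd0 : 0 < d) (hdn : d < (n : ℝ)) (hC₀ : 0 < C₀) :
    ∃ C : ℝ, 0 < C ∧
      ∀ Γ : Set (Euc n), Γ.Nonempty → IsClosed Γ → AhlforsRegular n d C₀ Γ →
        ∀ g : Euc n → ℝ, AEMeasurable g (μH[d].restrict Γ) →
          (∫⁻ x in Γ, ∫⁻ y in Γ,
              ENNReal.ofReal (|g x - g y| ^ 2) / ENNReal.ofReal (dist x y ^ (d + 1))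
                ∂(μH[d]) ∂(μH[d])) < ⊤ →
          ∃ u v, MemW n d Γ u v ∧ LocallyIntegrable u volume ∧
            (∫⁻ x in Γᶜ, ENNReal.ofReal (‖v x‖ ^ 2) ∂(measW n d Γ)) ^ ((1 : ℝ) / 2)
              ≤ ENNReal.ofReal C *
                (∫⁻ x in Γ, ∫⁻ y in Γ,
                  ENNReal.ofReal (|g x - g y| ^ 2) / ENNReal.ofReal (dist x y ^ (d + 1))
                    ∂(μH[d]) ∂(μH[d])) ^ ((1 : ℝ) / 2) ∧
            ∀ᵐ x ∂(μH[d].restrict Γ), HasTraceAt u x (g x) := by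
  have hd := hd0.le
  obtain ⟨C, hC, sqrt_le⟩ := exists_extensionConst_rpow_half_le n hd C₀
  refine ⟨C, hC, fun Γ hne hcl hreg g hg hgσ => ?_⟩
  set σ := (μH[d] : Measure (Euc n)).restrict Γ
  simp only [← Real.norm_eq_abs, ofReal_norm_sq (_ - _)] at hgσ ⊢
  change ∫⁻ x, gagliardoDensity (d + 1) σ g x ∂σ < ⊤ at hgσ
  have h : IsAhlforsRegularOn σ Γ d C₀ := hreg.isAhlforsRegularOn hcl hne hC₀
  have := h.isLocallyFiniteMeasure
  have := h.neZero
  have hg_loc : LocallyIntegrable g σ := locallyIntegrable_of_lintegral_gagliardoDensity_ne_top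
    (by linarith) hg.aestronglyMeasurable hgσ.ne
  have hdE : d < Module.finrank ℝ (Euc n) := by rwa [finrank_euclideanSpace_fin]
  have hΓ : volume Γ = 0 := measure_eq_zero_of_sigmaFinite_restrict_hausdorffMeasure hdE volume
  refine ⟨tentExtension Γ σ g, gradient (tentExtension Γ σ g), memW_tentExtension h hd hg_loc hgσ,
    locallyIntegrable_tentExtension h hd hdE hg_loc hΓ, ?_,
    ae_hasTraceAt_tentExtension h hd hdn hg_loc hgσ hΓ⟩
  refine (ENNReal.rpow_le_rpow (setLIntegral_norm_gradient_tentExtension_sq_measW_le h hd hg_loc)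
    (by norm_num)).trans ?_
  rw [ENNReal.mul_rpow_of_nonneg _ _ (by norm_num)]
  exact mul_le_mul_left sqrt_le _

/-- the extension theorem `E : H → W`. -/
theorem statement10 (n : ℕ) (hn : 2 ≤ n) (d C₀ : ℝ) (hd0 : 0 < d)
    (hdn : d < (n : ℝ) - 1) (hC₀ : 1 ≤ C₀) :
    ∃ C : ℝ, 0 < C ∧
      ∀ Γ : Set (Euc n), Γ.Nonempty → IsClosed Γ → AhlforsRegular n d C₀ Γ →
        ∀ g : Euc n → ℝ, AEMeasurable g (μH[d].restrict Γ) →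
          (∫⁻ x in Γ, ∫⁻ y in Γ,
              ENNReal.ofReal (|g x - g y| ^ 2) / ENNReal.ofReal (dist x y ^ (d + 1))
                ∂(μH[d]) ∂(μH[d])) < ⊤ →
          ∃ u v, MemW n d Γ u v ∧ LocallyIntegrable u volume ∧
            (∫⁻ x in Γᶜ, ENNReal.ofReal (‖v x‖ ^ 2) ∂(measW n d Γ)) ^ ((1 : ℝ) / 2)
              ≤ ENNReal.ofReal C *
                (∫⁻ x in Γ, ∫⁻ y in Γ,
                  ENNReal.ofReal (|g x - g y| ^ 2) / ENNReal.ofReal (dist x y ^ (d + 1))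
                    ∂(μH[d]) ∂(μH[d])) ^ ((1 : ℝ) / 2) ∧
            ∀ᵐ x ∂(μH[d].restrict Γ), HasTraceAt u x (g x) :=
  statement10_general n d C₀ hd0 (by linarith) (by linarith)
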